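/- arXiv:1509.02344 — 6 statements merged into one kernel-verified Lean document; each statement's English description precedes it below -/
import Mathlib

section
/- Let ε₁, ε₂ ∈ {−1, +1} and let S_ε := {ω ∈ S² : ε₁ω₁ ≥ 0 and ε₂ω₂ ≥ 0} be the corresponding quarter-sphere. For ψ⁰ ∈ ℝ and ψ¹ = (ψ¹₁, ψ¹₂) ∈ ℝ², there exists a finite nonnegative Borel measure μ on S² supported in S_ε with μ(S²) = ψ⁰ and ∫_{S²} Ω dμ = ψ¹ if and only if ‖ψ¹‖₂ ≤ ψ⁰, ε₁ψ¹₁ ≥ 0 and ε₂ψ¹₂ ≥ 0. (First-order quarter-moment realizability.) -/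
open MeasureTheory Real

noncomputable section

/-!
The first moment of a measure `μ` on the sphere is `μ(S²)` times an average of `Ω`, whose values lie
in the unit disc and in the closed convex cone cut out by the sign conditions; hence it lies in that
cone and has norm at most `μ(S²)`. Conversely, every point of the unit disc lies below a point of
the sphere, so a single point mass of weight `ψ⁰` placed above `ψ¹ / ψ⁰` has the prescribed moments.
-/

section Cone

variable {F : Type*} [NormedAddCommGroup F] [NormedSpace ℝ F] {α : Type*} [MeasurableSpace α]
  {f : α → F} {S : Set α}

lemma integral_mem_properCone [CompleteSpace F] {μ : Measure α} [IsFiniteMeasure μ]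
    (C : ProperCone ℝ F) (hfC : ∀ᵐ x ∂μ, f x ∈ C) (hf : Integrable f μ) : ∫ x, f x ∂μ ∈ C := by
  rcases eq_zero_or_neZero μ with rfl | _
  · rw [integral_zero_measure]
    exact C.zero_mem
  · rw [← measure_smul_average μ f]
    exact C.smul_mem (C.convex.average_mem C.isClosed hfC hf) measureReal_nonneg

lemma measureReal_eq_univ_of_ae_mem {μ : Measure α} (hS : ∀ᵐ x ∂μ, x ∈ S) :
    μ.real S = μ.real Set.univ :=
  measureReal_congr (Filter.eventuallyEq_univ.2 hS)

lemma exists_mem_closedBall_smul_eq_of_norm_le (C : ProperCone ℝ F) {m : ℝ} {v : F} (hvm : ‖v‖ ≤ m)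
    (hvC : v ∈ C) : ∃ p ∈ Metric.closedBall (0 : F) 1, p ∈ C ∧ m • p = v := by
  have hm : 0 ≤ m := (norm_nonneg v).trans hvm
  refine ⟨m⁻¹ • v, ?_, C.smul_mem hvC (inv_nonneg.2 hm), ?_⟩
  · rw [mem_closedBall_zero_iff, norm_smul, norm_inv, norm_of_nonneg hm]
    exact inv_mul_le_one_of_le₀ hvm hm
  · rcases hm.eq_or_lt with rfl | hm_pos
    · rw [zero_smul, norm_le_zero_iff.1 hvm]
    · exact smul_inv_smul₀ hm_pos.ne' v

theorem exists_measure_integral_eq_iff [CompleteSpace F] [MeasurableSingletonClass α]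
    (hf : StronglyMeasurable f) (hfS : f '' S = Metric.closedBall 0 1) (C : ProperCone ℝ F) (m : ℝ)
    (v : F) :
    (∃ μ : Measure α, IsFiniteMeasure μ ∧ (∀ᵐ x ∂μ, x ∈ S ∧ f x ∈ C) ∧ μ.real S = m ∧
      ∫ x, f x ∂μ = v) ↔ ‖v‖ ≤ m ∧ v ∈ C := by
  constructor
  · rintro ⟨μ, _, hμ, rfl, rfl⟩
    have hf_norm : ∀ᵐ x ∂μ, ‖f x‖ ≤ 1 := hμ.mono fun x hx ↦
      mem_closedBall_zero_iff.1 (hfS ▸ Set.mem_image_of_mem f hx.1)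
    have hf_int : Integrable f μ := .of_bound hf.aestronglyMeasurable 1 hf_norm
    refine ⟨?_, integral_mem_properCone C (hμ.mono fun x hx ↦ hx.2) hf_int⟩
    rw [measureReal_eq_univ_of_ae_mem (hμ.mono fun x hx ↦ hx.1)]
    simpa only [one_mul] using norm_integral_le_of_norm_le_const hf_norm
  · rintro ⟨hvm, hvC⟩
    have hm : 0 ≤ m := (norm_nonneg v).trans hvm
    obtain ⟨p, hp, hpC, hpv⟩ := exists_mem_closedBall_smul_eq_of_norm_le C hvm hvC
    obtain ⟨x, hxS, rfl⟩ : p ∈ f '' S := hfS ▸ hp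
    refine ⟨ENNReal.ofReal m • Measure.dirac x, Measure.smul_finite _ ENNReal.ofReal_ne_top,
      Measure.ae_smul_measure ?_ _, ?_, ?_⟩
    · rw [ae_dirac_eq]
      exact ⟨hxS, hpC⟩
    · simp [measureReal_def, hxS, hm]
    · rw [integral_smul_measure, integral_dirac, ENNReal.toReal_ofReal hm, hpv]

end Cone

section Sphere

variable {n : ℕ}

/-- The projection `Ω` of `ℝⁿ⁺¹` onto its first `n` coordinates. -/
def initProj (ω : EuclideanSpace ℝ (Fin (n + 1))) : EuclideanSpace ℝ (Fin n) :=
  WithLp.toLp 2 (Fin.init ω)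

lemma initProj_apply (ω : EuclideanSpace ℝ (Fin (n + 1))) (i : Fin n) :
    initProj ω i = ω i.castSucc :=
  rfl

lemma continuous_initProj : Continuous (initProj (n := n)) := by
  unfold initProj Fin.init
  fun_prop

lemma norm_sq_eq_norm_initProj_sq_add (ω : EuclideanSpace ℝ (Fin (n + 1))) :
    ‖ω‖ ^ 2 = ‖initProj ω‖ ^ 2 + ω (Fin.last n) ^ 2 := by
  simp only [EuclideanSpace.real_norm_sq_eq, Fin.sum_univ_castSucc, initProj_apply]

lemma initProj_image_sphere :
    initProj '' Metric.sphere (0 : EuclideanSpace ℝ (Fin (n + 1))) 1 = Metric.closedBall 0 1 := by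
  ext p
  rw [mem_closedBall_zero_iff]
  constructor
  · rintro ⟨ω, hω, rfl⟩
    rw [← sq_le_one_iff₀ (norm_nonneg _)]
    have hω_sq := norm_sq_eq_norm_initProj_sq_add ω
    rw [mem_sphere_zero_iff_norm.1 hω] at hω_sq
    linarith [sq_nonneg (ω (Fin.last n))]
  · intro hp
    let ω : EuclideanSpace ℝ (Fin (n + 1)) :=
      WithLp.toLp 2 (Fin.snoc (α := fun _ ↦ ℝ) p √(1 - ‖p‖ ^ 2))
    have hω_init : initProj ω = p := by
      ext i
      simp [initProj_apply, ω]
    have hω_last : ω (Fin.last n) ^ 2 = 1 - ‖p‖ ^ 2 := by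
      simp only [ω, Fin.snoc_last]
      exact sq_sqrt (sub_nonneg.2 (pow_le_one₀ (norm_nonneg p) hp))
    refine ⟨ω, ?_, hω_init⟩
    rw [mem_sphere_zero_iff_norm, ← pow_eq_one_iff_of_nonneg (norm_nonneg ω) two_ne_zero,
      norm_sq_eq_norm_initProj_sq_add, hω_init, hω_last, add_sub_cancel]

lemma integrable_coord_of_ae_norm_eq_one {ι : Type*} [Fintype ι]
    {μ : Measure (EuclideanSpace ℝ ι)} [IsFiniteMeasure μ] (hμ : ∀ᵐ ω ∂μ, ‖ω‖ = 1) (i : ι) :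
    Integrable (fun ω ↦ ω i) μ :=
  .of_bound (by fun_prop) 1 (hμ.mono fun ω hω ↦ hω ▸ PiLp.norm_apply_le ω i)

lemma integral_initProj_eq_iff {μ : Measure (EuclideanSpace ℝ (Fin (n + 1)))} [IsFiniteMeasure μ]
    (hμ : ∀ᵐ ω ∂μ, ‖ω‖ = 1) (ψ : EuclideanSpace ℝ (Fin n)) :
    ∫ ω, initProj ω ∂μ = ψ ↔ ∀ i : Fin n, ∫ ω, ω i.castSucc ∂μ = ψ i := by
  have h_apply (i : Fin n) : (∫ ω, initProj ω ∂μ) i = ∫ ω, ω i.castSucc ∂μ :=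
    eval_integral_piLp (fun j ↦ integrable_coord_of_ae_norm_eq_one hμ j.castSucc) i
  simp only [PiLp.ext_iff, h_apply]

end Sphere

section SignCone

variable {ι : Type*}

/-- The cone of vectors whose `i`-th coordinate is zero or has the sign of `ε i`; a coordinate with
`ε i = 0` is unconstrained. -/
def signCone (ε : ι → ℝ) : ProperCone ℝ (EuclideanSpace ℝ ι) :=
  ⨅ i, (ProperCone.positive ℝ ℝ).comap (ε i • EuclideanSpace.proj i)

lemma mem_signCone {ε : ι → ℝ} {y : EuclideanSpace ℝ ι} :
    y ∈ signCone ε ↔ ∀ i, 0 ≤ ε i * y i := by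
  simp [signCone]

end SignCone

theorem quarter_moment_realizability_first_order_general {n : ℕ}
    (C : ProperCone ℝ (EuclideanSpace ℝ (Fin n))) (ψ₀ : ℝ) (ψ : EuclideanSpace ℝ (Fin n)) :
    (∃ μ : Measure (EuclideanSpace ℝ (Fin (n + 1))), IsFiniteMeasure μ ∧
        (∀ᵐ ω ∂μ, ‖ω‖ = 1 ∧ initProj ω ∈ C) ∧
        μ.real (Metric.sphere (0 : EuclideanSpace ℝ (Fin (n + 1))) 1) = ψ₀ ∧
        ∀ i : Fin n, ∫ ω, ω i.castSucc ∂μ = ψ i) ↔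
      ‖ψ‖ ≤ ψ₀ ∧ ψ ∈ C := by
  rw [← exists_measure_integral_eq_iff continuous_initProj.stronglyMeasurable
    initProj_image_sphere C ψ₀ ψ]
  simp only [mem_sphere_zero_iff_norm]
  refine exists_congr fun μ ↦ and_congr_right fun _ ↦ and_congr_right fun hμ ↦
    and_congr_right fun _ ↦ ?_
  exact (integral_initProj_eq_iff (hμ.mono fun ω hω ↦ hω.1) ψ).symm

/-- First-order quarter-moment realizability: a moment vector `(ψ₀, ψ₁, ψ₂)` is realizable by a
finite nonnegative Borel measure supported in the quarter-sphere
`S_ε = {ω ∈ S² : ε₁ ω₁ ≥ 0, ε₂ ω₂ ≥ 0}` iff `‖(ψ₁,ψ₂)‖₂ ≤ ψ₀`, `ε₁ ψ₁ ≥ 0` and `ε₂ ψ₂ ≥ 0`. -/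
theorem quarter_moment_realizability_first_order
    (ε₁ ε₂ : ℝ) (hε₁ : ε₁ = 1 ∨ ε₁ = -1) (hε₂ : ε₂ = 1 ∨ ε₂ = -1)
    (ψ₀ ψ₁ ψ₂ : ℝ) :
    (∃ μ : Measure (EuclideanSpace ℝ (Fin 3)), IsFiniteMeasure μ ∧
        μ {ω | ¬ (‖ω‖ = 1 ∧ 0 ≤ ε₁ * ω 0 ∧ 0 ≤ ε₂ * ω 1)} = 0 ∧
        (μ (Metric.sphere (0 : EuclideanSpace ℝ (Fin 3)) 1)).toReal = ψ₀ ∧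
        (∫ ω, ω 0 ∂μ) = ψ₁ ∧ (∫ ω, ω 1 ∂μ) = ψ₂) ↔
      (Real.sqrt (ψ₁ ^ 2 + ψ₂ ^ 2) ≤ ψ₀ ∧ 0 ≤ ε₁ * ψ₁ ∧ 0 ≤ ε₂ * ψ₂) := by
  simpa [ae_iff, mem_signCone, initProj_apply, measureReal_def, EuclideanSpace.norm_eq] using
    quarter_moment_realizability_first_order_general (signCone ![ε₁, ε₂]) ψ₀ !₂[ψ₁, ψ₂]
end
end

section
/- For a vector (ψ⁰, ψx⁺, ψx⁻, ψy⁺, ψy⁻) ∈ ℝ⁵ there exists a finite nonnegative Borel measure μ on S² with μ(S²) = ψ⁰, ∫_{{ω₁>0}} ω₁ dμ = ψx⁺, ∫_{{ω₁<0}} ω₁ dμ = ψx⁻, ∫_{{ω₂>0}} ω₂ dμ = ψy⁺ and ∫_{{ω₂<0}} ω₂ dμ = ψy⁻ if and only if √((ψx⁺ − ψx⁻)² + (ψy⁺ − ψy⁻)²) ≤ ψ⁰, ψx⁺ ≥ 0, ψy⁺ ≥ 0, ψx⁻ ≤ 0 and ψy⁻ ≤ 0. (First-order mixed-moment realizability.)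 -/
open MeasureTheory Real

noncomputable section

/-!
Subtracting the two half-space moments in direction `i` gives `∫ |ω i| ∂μ`. On the unit sphere the
vector of the `|ω i|` has norm at most one, so `‖∫ f‖ ≤ ∫ ‖f‖` bounds the norm of the vector of
these differences by the total mass. Conversely, let `R` be that norm. After dividing by `R`, each
pair of half-space moments is realized by a law on two opposite points `±r i` of the line, and the
squares of the `r i` sum to one, so the product of these laws lives on the sphere. Multiplying it
by `R` gives the right half-space moments with mass `R`, and the missing mass `ψ₀ - R` is put on a
pole orthogonal to all the directions concerned.
-/

open scoped NNReal

section Integrals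

variable {α : Type*} {mα : MeasurableSpace α} {μ : Measure α}

lemma setIntegral_pos_sub_setIntegral_neg {f : α → ℝ} (hf : Integrable f μ) :
    (∫ x in {x | 0 < f x}, f x ∂μ) - ∫ x in {x | f x < 0}, f x ∂μ = ∫ x, |f x| ∂μ := by
  have pos_eq_nonneg : ∫ x in {x | 0 < f x}, f x ∂μ = ∫ x in {x | 0 ≤ f x}, f x ∂μ := by
    simpa [integral_neg] using setIntegral_neg_eq_setIntegral_nonpos (f := -f) hf.neg.1
  rw [pos_eq_nonneg, setIntegral_neg_eq_setIntegral_nonpos hf.1, ← integral_norm_eq_pos_sub_neg hf]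
  rfl

lemma sqrt_sum_sq_integral_le {ι : Type*} {s : Finset ι} {f : ι → α → ℝ}
    (hf : ∀ i ∈ s, Integrable (f i) μ) :
    √(∑ i ∈ s, (∫ x, f i x ∂μ) ^ 2) ≤ ∫ x, √(∑ i ∈ s, f i x ^ 2) ∂μ := by
  let F : α → EuclideanSpace ℝ s := fun x ↦ WithLp.toLp 2 fun i ↦ f i x
  have integral_F (i : s) : (∫ x, F x ∂μ) i = ∫ x, f i x ∂μ :=
    eval_integral_piLp (f := F) (fun j ↦ hf j j.2) i
  have h := norm_integral_le_integral_norm (μ := μ) F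
  simp only [EuclideanSpace.norm_eq, integral_F, Real.norm_eq_abs, sq_abs] at h
  have sum_F (x : α) : ∑ i, F x i ^ 2 = ∑ i ∈ s, f i x ^ 2 := Finset.sum_coe_sort s (f · x ^ 2)
  simpa only [sum_F, Finset.sum_coe_sort s fun i ↦ (∫ x, f i x ∂μ) ^ 2] using h

end Integrals

lemma measurePreserving_apply_map_toLp_pi {ι : Type*} [Fintype ι] {X : ι → Type*}
    [∀ i, MeasurableSpace (X i)] (ν : ∀ i, Measure (X i)) [∀ i, IsProbabilityMeasure (ν i)]
    (q : ENNReal) (i : ι) :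
    MeasurePreserving (fun x : PiLp q X ↦ x i) ((Measure.pi ν).map (WithLp.toLp q)) (ν i) where
  measurable := by fun_prop
  map_eq := by
    rw [Measure.map_map (by fun_prop) (by fun_prop)]
    exact (measurePreserving_eval ν i).map_eq

lemma setIntegral_Ioi_dirac (c : ℝ) : ∫ x in Set.Ioi 0, x ∂Measure.dirac c = max c 0 := by
  rw [setIntegral_dirac, max_comm, max_def_lt]
  rfl

lemma setIntegral_Iio_dirac (c : ℝ) : ∫ x in Set.Iio 0, x ∂Measure.dirac c = min c 0 := by
  rw [setIntegral_dirac, min_def_lt]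
  rfl

lemma exists_isProbabilityMeasure_ae_abs_eq {p m : ℝ} (hp : 0 ≤ p) (hm : m ≤ 0) :
    ∃ ν : Measure ℝ, IsProbabilityMeasure ν ∧ (∀ᵐ x ∂ν, |x| = p - m) ∧
      ∫ x in Set.Ioi 0, x ∂ν = p ∧ ∫ x in Set.Iio 0, x ∂ν = m := by
  have hmp : m ≤ p := hm.trans hp
  have hr : 0 ≤ p - m := sub_nonneg.2 hmp
  obtain ⟨t, ⟨ht₀, ht₁⟩, htp⟩ : ∃ t ∈ Set.Icc (0 : ℝ) 1, t * (p - m) = p :=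
    ⟨p / (p - m), ⟨by positivity, div_le_one_of_le₀ (by linarith) hr⟩,
      div_mul_cancel_of_imp fun h ↦ by linarith⟩
  have hint (q c : ℝ) (S : Set ℝ) :
      Integrable (fun x ↦ x) ((ENNReal.ofReal q • Measure.dirac c).restrict S) :=
    ((integrable_dirac (by simp)).smul_measure (by simp)).restrict
  refine ⟨ENNReal.ofReal t • Measure.dirac (p - m) + ENNReal.ofReal (1 - t) • Measure.dirac (m - p),
    ⟨?_⟩, ?_, ?_, ?_⟩
  · simp [← ENNReal.ofReal_add ht₀ (sub_nonneg.2 ht₁)]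
  · rw [ae_add_measure_iff]
    constructor <;> refine Measure.ae_smul_measure ?_ _ <;>
      simp [ae_dirac_eq, abs_of_nonneg hr, abs_sub_comm m p]
  · rw [Measure.restrict_add, integral_add_measure (hint _ _ _) (hint _ _ _)]
    simp [setIntegral_Ioi_dirac, ht₀, htp, hmp]
  · rw [Measure.restrict_add, integral_add_measure (hint _ _ _) (hint _ _ _)]
    have hneg : (1 - t) * (m - p) = m := by linear_combination htp
    simp [setIntegral_Iio_dirac, ht₁, hmp, hneg]

section MixedMoments

variable {ι : Type*} [Fintype ι] {s : Finset ι} {μ ν : Measure (EuclideanSpace ℝ ι)}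
  {a b : ℝ} {p m p' m' : ι → ℝ}

/-- The measure `μ` on `ℝ^ι` is finite, is carried by the unit sphere, has total mass `ψ₀` and has
half-space moments `ψp i` and `ψm i` in every direction `i ∈ s`. The entries of `ψp` and `ψm`
outside `s` are irrelevant. -/
def HasMixedMoments (μ : Measure (EuclideanSpace ℝ ι)) (s : Finset ι) (ψ₀ : ℝ) (ψp ψm : ι → ℝ) :
    Prop :=
  IsFiniteMeasure μ ∧
    μ (Metric.sphere 0 1)ᶜ = 0 ∧
    μ.real (Metric.sphere 0 1) = ψ₀ ∧
    ∀ i ∈ s, (∫ ω in {ω | 0 < ω i}, ω i ∂μ) = ψp i ∧ (∫ ω in {ω | ω i < 0}, ω i ∂μ) = ψm i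

lemma integrable_apply_of_measure_compl_sphere [IsFiniteMeasure μ] {r : ℝ}
    (hμ : μ (Metric.sphere 0 r)ᶜ = 0) (i : ι) : Integrable (fun ω ↦ ω i) μ := by
  refine .of_bound (by fun_prop) r ?_
  filter_upwards [mem_ae_iff.2 hμ] with ω hω
  exact (PiLp.norm_apply_le ω i).trans_eq (by simpa using hω)

namespace HasMixedMoments

lemma sqrt_sum_sq_sub_le (h : HasMixedMoments μ s a p m) :
    √(∑ i ∈ s, (p i - m i) ^ 2) ≤ a := by
  obtain ⟨_, hsphere, rfl, hmom⟩ := h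
  have hint := integrable_apply_of_measure_compl_sphere hsphere
  calc √(∑ i ∈ s, (p i - m i) ^ 2)
      = √(∑ i ∈ s, (∫ ω, |ω i| ∂μ) ^ 2) := by
        congr 1
        refine Finset.sum_congr rfl fun i hi ↦ ?_
        rw [← setIntegral_pos_sub_setIntegral_neg (hint i), (hmom i hi).1, (hmom i hi).2]
    _ ≤ ∫ ω, √(∑ i ∈ s, |ω i| ^ 2) ∂μ := sqrt_sum_sq_integral_le fun i _ ↦ (hint i).abs
    _ ≤ ∫ _, 1 ∂μ := by
        refine integral_mono_of_nonneg (.of_forall fun _ ↦ sqrt_nonneg _) (integrable_const 1) ?_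
        filter_upwards [mem_ae_iff.2 hsphere] with ω hω
        rw [← mem_sphere_zero_iff_norm.1 hω, EuclideanSpace.norm_eq]
        exact sqrt_le_sqrt (Finset.sum_le_univ_sum_of_nonneg fun _ ↦ sq_nonneg _)
    _ = μ.real (Metric.sphere 0 1) := by
        rw [integral_const, smul_eq_mul, mul_one, measureReal_congr (ae_eq_univ.2 hsphere)]

lemma posMoment_nonneg (h : HasMixedMoments μ s a p m) {i : ι} (hi : i ∈ s) : 0 ≤ p i :=
  (h.2.2.2 i hi).1 ▸ setIntegral_nonneg (measurableSet_lt (by fun_prop) (by fun_prop))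
    fun _ hω ↦ le_of_lt hω

lemma negMoment_nonpos (h : HasMixedMoments μ s a p m) {i : ι} (hi : i ∈ s) : m i ≤ 0 :=
  (h.2.2.2 i hi).2 ▸ setIntegral_nonpos (measurableSet_lt (by fun_prop) (by fun_prop))
    fun _ hω ↦ le_of_lt hω

lemma congr (h : HasMixedMoments μ s a p m) (hp : ∀ i ∈ s, p i = p' i) (hm : ∀ i ∈ s, m i = m' i) :
    HasMixedMoments μ s a p' m' :=
  ⟨h.1, h.2.1, h.2.2.1, fun i hi ↦ hp i hi ▸ hm i hi ▸ h.2.2.2 i hi⟩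

lemma add (hμ : HasMixedMoments μ s a p m) (hν : HasMixedMoments ν s b p' m') :
    HasMixedMoments (μ + ν) s (a + b) (p + p') (m + m') := by
  obtain ⟨_, hμsphere, rfl, hμmom⟩ := hμ
  obtain ⟨_, hνsphere, rfl, hνmom⟩ := hν
  refine ⟨inferInstance, by simp [hμsphere, hνsphere], measureReal_add_apply, fun i hi ↦ ?_⟩
  have hμint := integrable_apply_of_measure_compl_sphere hμsphere i
  have hνint := integrable_apply_of_measure_compl_sphere hνsphere i
  constructor <;>
    simp only [Measure.restrict_add, integral_add_measure hμint.restrict hνint.restrict,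
      hμmom i hi, hνmom i hi, Pi.add_apply]

lemma nnreal_smul (h : HasMixedMoments μ s a p m) (c : ℝ≥0) :
    HasMixedMoments (c • μ) s (c * a) (fun i ↦ c * p i) (fun i ↦ c * m i) := by
  obtain ⟨_, hsphere, rfl, hmom⟩ := h
  refine ⟨inferInstance, by simp [hsphere], measureReal_nnreal_smul_apply c, fun i hi ↦ ?_⟩
  constructor <;>
    simp only [Measure.restrict_smul, integral_smul_nnreal_measure, hmom i hi, NNReal.smul_def,
      smul_eq_mul]

end HasMixedMoments

lemma hasMixedMoments_zero : HasMixedMoments 0 s 0 0 0 :=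
  ⟨inferInstance, by simp, by simp, by simp⟩

lemma hasMixedMoments_dirac_single [DecidableEq ι] {j : ι} (hj : j ∉ s) :
    HasMixedMoments (Measure.dirac (EuclideanSpace.single j 1)) s 1 0 0 := by
  refine ⟨inferInstance, by simp [Measure.dirac_apply], by simp [measureReal_def], fun i hi ↦ ?_⟩
  have hij : i ≠ j := ne_of_mem_of_not_mem hi hj
  constructor <;> simp [hij]

lemma hasMixedMoments_of_measurePreserving_apply [IsProbabilityMeasure μ] {ν : ι → Measure ℝ}
    (hμ : ∀ i, MeasurePreserving (fun ω ↦ ω i) μ (ν i)) {r : ι → ℝ}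
    (hν : ∀ i, ∀ᵐ x ∂ν i, |x| = r i) (hr : ∑ i, r i ^ 2 = 1) :
    HasMixedMoments μ s 1
      (fun i ↦ ∫ x in Set.Ioi 0, x ∂ν i) (fun i ↦ ∫ x in Set.Iio 0, x ∂ν i) := by
  have abs_apply_eq : ∀ᵐ ω ∂μ, ∀ i, |ω i| = r i :=
    ae_all_iff.2 fun i ↦ (hμ i).quasiMeasurePreserving.ae (hν i)
  have mem_sphere : ∀ᵐ ω ∂μ, ω ∈ Metric.sphere 0 1 := by
    filter_upwards [abs_apply_eq] with ω hω
    simp [EuclideanSpace.norm_eq, hω, hr]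
  refine ⟨inferInstance, mem_sphere, ?_, fun i _ ↦ ⟨?_, ?_⟩⟩
  · exact (measureReal_congr (ae_eq_univ.2 mem_sphere)).trans probReal_univ
  · simp only [← (hμ i).map_eq]
    exact (setIntegral_map (f := id) measurableSet_Ioi (by fun_prop) (hμ i).aemeasurable).symm
  · simp only [← (hμ i).map_eq]
    exact (setIntegral_map (f := id) measurableSet_Iio (by fun_prop) (hμ i).aemeasurable).symm

lemma exists_hasMixedMoments_of_sum_sq_sub_eq_one (hp : ∀ i, 0 ≤ p i) (hm : ∀ i, m i ≤ 0)
    (h : ∑ i, (p i - m i) ^ 2 = 1) : ∃ μ, HasMixedMoments μ s 1 p m := by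
  choose ν hprob habs hpos hneg using
    fun i ↦ exists_isProbabilityMeasure_ae_abs_eq (hp i) (hm i)
  have : IsProbabilityMeasure ((Measure.pi ν).map (WithLp.toLp 2 : _ → EuclideanSpace ℝ ι)) :=
    Measure.isProbabilityMeasure_map (by fun_prop)
  refine ⟨(Measure.pi ν).map (WithLp.toLp 2), ?_⟩
  simpa only [hpos, hneg] using
    hasMixedMoments_of_measurePreserving_apply (measurePreserving_apply_map_toLp_pi ν 2) habs h

lemma exists_hasMixedMoments_sqrt_sum_sq_sub (hp : ∀ i, 0 ≤ p i) (hm : ∀ i, m i ≤ 0) :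
    ∃ μ, HasMixedMoments μ s √(∑ i, (p i - m i) ^ 2) p m := by
  have hsq : √(∑ i, (p i - m i) ^ 2) ^ 2 = ∑ i, (p i - m i) ^ 2 :=
    sq_sqrt (Finset.sum_nonneg fun _ _ ↦ sq_nonneg _)
  obtain ⟨R, hR⟩ : ∃ R : ℝ≥0, R = √(∑ i, (p i - m i) ^ 2) := ⟨⟨_, sqrt_nonneg _⟩, rfl⟩
  rw [← hR] at hsq ⊢
  rcases eq_or_ne R 0 with rfl | hR₀
  · have hpm (i : ι) : p i - m i = 0 := by
      simpa using (Finset.sum_eq_zero_iff_of_nonneg fun _ _ ↦ sq_nonneg _).1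
        (hsq.symm.trans (by simp)) i (Finset.mem_univ i)
    have hp₀ (i : ι) : p i = 0 := by linarith [hpm i, hp i, hm i]
    have hm₀ (i : ι) : m i = 0 := by linarith [hpm i, hp i, hm i]
    exact ⟨0, hasMixedMoments_zero.congr (fun i _ ↦ (hp₀ i).symm) (fun i _ ↦ (hm₀ i).symm)⟩
  · have hR₀' : (R : ℝ) ≠ 0 := by exact_mod_cast hR₀
    have hsum : ∑ i, (p i / R - m i / R) ^ 2 = 1 := by
      simp only [← sub_div, div_pow, ← Finset.sum_div, ← hsq]
      exact div_self (pow_ne_zero 2 hR₀')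
    obtain ⟨μ, hμ⟩ := exists_hasMixedMoments_of_sum_sq_sub_eq_one (s := s)
      (fun i ↦ div_nonneg (hp i) R.2) (fun i ↦ div_nonpos_of_nonpos_of_nonneg (hm i) R.2) hsum
    exact ⟨R • μ, by simpa [mul_div_cancel₀, hR₀'] using hμ.nnreal_smul R⟩

lemma exists_hasMixedMoments_of_sqrt_sum_sq_sub_le {j : ι} (hj : j ∉ s)
    (hp : ∀ i ∈ s, 0 ≤ p i) (hm : ∀ i ∈ s, m i ≤ 0)
    (ha : √(∑ i ∈ s, (p i - m i) ^ 2) ≤ a) : ∃ μ, HasMixedMoments μ s a p m := by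
  classical
  let zeroExtend (f : ι → ℝ) : ι → ℝ := (s : Set ι).indicator f
  have sum_zeroExtend : ∑ i, (zeroExtend p i - zeroExtend m i) ^ 2 = ∑ i ∈ s, (p i - m i) ^ 2 := by
    rw [← Finset.sum_indicator_subset _ s.subset_univ]
    refine Finset.sum_congr rfl fun i _ ↦ ?_
    by_cases hi : i ∈ s <;> simp [zeroExtend, hi]
  obtain ⟨μ, hμ⟩ := exists_hasMixedMoments_sqrt_sum_sq_sub (s := s)
    (p := zeroExtend p) (m := zeroExtend m) (Set.indicator_nonneg hp) (Set.indicator_nonpos hm)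
  have h := hμ.add
    ((hasMixedMoments_dirac_single hj).nnreal_smul (a - √(∑ i ∈ s, (p i - m i) ^ 2)).toNNReal)
  rw [sum_zeroExtend, Real.coe_toNNReal _ (sub_nonneg.2 ha)] at h
  refine ⟨_, HasMixedMoments.congr (by simpa using h) ?_ ?_⟩ <;>
    simp +contextual [zeroExtend]

theorem mixed_moment_realizability_first_order_general (hs : s ≠ Finset.univ)
    (ψ₀ : ℝ) (ψp ψm : ι → ℝ) :
    (∃ μ, HasMixedMoments μ s ψ₀ ψp ψm) ↔
      √(∑ i ∈ s, (ψp i - ψm i) ^ 2) ≤ ψ₀ ∧ (∀ i ∈ s, 0 ≤ ψp i) ∧ ∀ i ∈ s, ψm i ≤ 0 := by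
  obtain ⟨j, hj⟩ : ∃ j, j ∉ s := by simpa [Finset.eq_univ_iff_forall] using hs
  constructor
  · rintro ⟨μ, hμ⟩
    exact ⟨hμ.sqrt_sum_sq_sub_le, fun i ↦ hμ.posMoment_nonneg, fun i ↦ hμ.negMoment_nonpos⟩
  · rintro ⟨hle, hp, hm⟩
    exact exists_hasMixedMoments_of_sqrt_sum_sq_sub_le hj hp hm hle

end MixedMoments

/-- First-order mixed-moment realizability: `(ψ⁰, ψx⁺, ψx⁻, ψy⁺, ψy⁻)` is realizable by a finite
nonnegative Borel measure on the unit sphere `S²` iff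
`√((ψx⁺ − ψx⁻)² + (ψy⁺ − ψy⁻)²) ≤ ψ⁰`, `ψx⁺ ≥ 0`, `ψy⁺ ≥ 0`, `ψx⁻ ≤ 0`, `ψy⁻ ≤ 0`. -/
theorem mixed_moment_realizability_first_order
    (ψ₀ ψxp ψxm ψyp ψym : ℝ) :
    (∃ μ : Measure (EuclideanSpace ℝ (Fin 3)), IsFiniteMeasure μ ∧
        μ (Metric.sphere (0 : EuclideanSpace ℝ (Fin 3)) 1)ᶜ = 0 ∧
        (μ (Metric.sphere (0 : EuclideanSpace ℝ (Fin 3)) 1)).toReal = ψ₀ ∧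
        (∫ ω in {ω : EuclideanSpace ℝ (Fin 3) | 0 < ω 0}, ω 0 ∂μ) = ψxp ∧
        (∫ ω in {ω : EuclideanSpace ℝ (Fin 3) | ω 0 < 0}, ω 0 ∂μ) = ψxm ∧
        (∫ ω in {ω : EuclideanSpace ℝ (Fin 3) | 0 < ω 1}, ω 1 ∂μ) = ψyp ∧
        (∫ ω in {ω : EuclideanSpace ℝ (Fin 3) | ω 1 < 0}, ω 1 ∂μ) = ψym) ↔
      (Real.sqrt ((ψxp - ψxm) ^ 2 + (ψyp - ψym) ^ 2) ≤ ψ₀ ∧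
        0 ≤ ψxp ∧ 0 ≤ ψyp ∧ ψxm ≤ 0 ∧ ψym ≤ 0) := by
  simpa [HasMixedMoments, Measure.real, and_assoc] using
    mixed_moment_realizability_first_order_general (s := ({0, 1} : Finset (Fin 3))) (by decide)
      ψ₀ ![ψxp, ψyp, 0] ![ψxm, ψym, 0]
end
end

section
/- Let μ be a finite nonnegative Borel measure on S² supported in the quarter-sphere S₊₊ with μ(S²) = 1, and suppose the first moment φ := ∫_{S²} Ω dμ satisfies ‖φ‖₂ = 1. Then the second moment equals the rank-one matrix ∫_{S²} Ω Ωᵀ dμ = φ φᵀ; in particular φ is an eigenvector of the second moment with eigenvalue λ = 1 = ‖φ‖₂ = ‖φ‖₂². -/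
open MeasureTheory Real

noncomputable section

/-!
A disc is strictly convex, so a random vector with values in it whose mean lies on the boundary
circle is almost surely constant, equal to its mean `φ`. Hence `Ω Ωᵀ = φ φᵀ` almost surely.
-/

section RandomVector

variable {α ι E : Type*} [MeasurableSpace α] {μ : Measure α}

theorem ae_eq_integral_of_norm_le_of_norm_integral_eq [NormedAddCommGroup E] [NormedSpace ℝ E]
    [CompleteSpace E] [StrictConvexSpace ℝ E] [IsProbabilityMeasure μ] {X : α → E} {R : ℝ}
    (hle : ∀ᵐ a ∂μ, ‖X a‖ ≤ R) (heq : ‖∫ a, X a ∂μ‖ = R) :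
    ∀ᵐ a ∂μ, X a = ∫ a, X a ∂μ := by
  have hdich := ae_eq_const_or_norm_average_lt_of_norm_le_const hle
  rw [average_eq_integral] at hdich
  exact hdich.resolve_right heq.not_lt

/-- The second moment `∫ X Xᵀ dμ` of a random vector `X`, taken entrywise; an entry whose integrand
is not integrable is `0`. -/
def secondMoment (X : α → EuclideanSpace ℝ ι) (μ : Measure α) : Matrix ι ι ℝ :=
  Matrix.of fun i j ↦ ∫ a, X a i * X a j ∂μ

theorem secondMoment_eq_vecMulVec_of_ae_eq_const [IsProbabilityMeasure μ]
    {X : α → EuclideanSpace ℝ ι} {v : EuclideanSpace ℝ ι} (hX : ∀ᵐ a ∂μ, X a = v) :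
    secondMoment X μ = Matrix.vecMulVec v v := by
  ext i j
  calc ∫ a, X a i * X a j ∂μ
      = ∫ _, v i * v j ∂μ := integral_congr_ae (hX.mono fun a ha ↦ by simp only [ha])
    _ = v i * v j := by simp

theorem vecMulVec_self_mulVec_self [Fintype ι] (v : EuclideanSpace ℝ ι) :
    (Matrix.vecMulVec v v).mulVec v = ‖v‖ ^ 2 • (v : ι → ℝ) := by
  have hdot : (v : ι → ℝ) ⬝ᵥ v = ‖v‖ ^ 2 := by
    simp only [EuclideanSpace.real_norm_sq_eq, dotProduct, pow_two (v _)]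
  rw [Matrix.vecMulVec_mulVec, op_smul_eq_smul, hdot]

theorem quarter_moment_eigenvector_boundary_general [Fintype ι] [IsProbabilityMeasure μ]
    {X : α → EuclideanSpace ℝ ι} {φ : EuclideanSpace ℝ ι} {R : ℝ}
    (hle : ∀ᵐ a ∂μ, ‖X a‖ ≤ R) (hφ : ∫ a, X a ∂μ = φ) (hnorm : ‖φ‖ = R) :
    secondMoment X μ = Matrix.vecMulVec φ φ ∧
      (secondMoment X μ).mulVec φ = R ^ 2 • (φ : ι → ℝ) := by
  subst hφ
  have hrank := secondMoment_eq_vecMulVec_of_ae_eq_const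
    (ae_eq_integral_of_norm_le_of_norm_integral_eq hle hnorm)
  exact ⟨hrank, by rw [hrank, vecMulVec_self_mulVec_self, hnorm]⟩

end RandomVector

/-- The projection `Ω` of `ℝ³` onto its first two coordinates. -/
def planarProj (ω : EuclideanSpace ℝ (Fin 3)) : EuclideanSpace ℝ (Fin 2) :=
  !₂[ω 0, ω 1]

theorem norm_planarProj_le (ω : EuclideanSpace ℝ (Fin 3)) : ‖planarProj ω‖ ≤ ‖ω‖ := by
  refine le_of_sq_le_sq ?_ (norm_nonneg ω)
  calc ‖planarProj ω‖ ^ 2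
      = ω 0 ^ 2 + ω 1 ^ 2 := by simp [EuclideanSpace.real_norm_sq_eq, planarProj]
    _ ≤ ω 0 ^ 2 + ω 1 ^ 2 + ω 2 ^ 2 := le_add_of_nonneg_right (sq_nonneg _)
    _ = ‖ω‖ ^ 2 := by rw [EuclideanSpace.real_norm_sq_eq, Fin.sum_univ_three]

theorem continuous_planarProj : Continuous planarProj := by
  unfold planarProj
  fun_prop

theorem secondMoment_planarProj (μ : Measure (EuclideanSpace ℝ (Fin 3))) :
    secondMoment planarProj μ =
      !![∫ ω, ω 0 * ω 0 ∂μ, ∫ ω, ω 0 * ω 1 ∂μ;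
         ∫ ω, ω 1 * ω 0 ∂μ, ∫ ω, ω 1 * ω 1 ∂μ] :=
  Matrix.eta_fin_two _

theorem integral_planarProj {μ : Measure (EuclideanSpace ℝ (Fin 3))}
    (hint : Integrable planarProj μ) :
    ∫ ω, planarProj ω ∂μ = !₂[∫ ω, ω 0 ∂μ, ∫ ω, ω 1 ∂μ] := by
  ext i
  rw [eval_integral_piLp hint.eval_piLp]
  fin_cases i <;> rfl

/-- Case (d) of the structure lemma for quarter moments: if a probability measure `μ` supported in
the quarter-sphere `S₊₊` has first moment `φ` of Euclidean norm `1`, then its second moment is the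
rank-one matrix `φ φᵀ`; in particular `φ` is an eigenvector with eigenvalue `1 = ‖φ‖₂ = ‖φ‖₂²`. -/
theorem quarter_moment_eigenvector_boundary
    (μ : Measure (EuclideanSpace ℝ (Fin 3))) [IsFiniteMeasure μ]
    (hsupp : μ {ω | ¬ (‖ω‖ = 1 ∧ 0 ≤ ω 0 ∧ 0 ≤ ω 1)} = 0)
    (hmass : μ Set.univ = 1)
    (hnorm : Real.sqrt ((∫ ω, ω 0 ∂μ) ^ 2 + (∫ ω, ω 1 ∂μ) ^ 2) = 1) :
    (!![∫ ω, ω 0 * ω 0 ∂μ, ∫ ω, ω 0 * ω 1 ∂μ;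
        ∫ ω, ω 1 * ω 0 ∂μ, ∫ ω, ω 1 * ω 1 ∂μ] =
      Matrix.vecMulVec ![∫ ω, ω 0 ∂μ, ∫ ω, ω 1 ∂μ] ![∫ ω, ω 0 ∂μ, ∫ ω, ω 1 ∂μ]) ∧
    ((!![∫ ω, ω 0 * ω 0 ∂μ, ∫ ω, ω 0 * ω 1 ∂μ;
         ∫ ω, ω 1 * ω 0 ∂μ, ∫ ω, ω 1 * ω 1 ∂μ]).mulVec ![∫ ω, ω 0 ∂μ, ∫ ω, ω 1 ∂μ] =
      (1 : ℝ) • ![∫ ω, ω 0 ∂μ, ∫ ω, ω 1 ∂μ]) := by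
  have : IsProbabilityMeasure μ := ⟨hmass⟩
  have hle : ∀ᵐ ω ∂μ, ‖planarProj ω‖ ≤ 1 :=
    (ae_iff.2 hsupp).mono fun ω hω ↦ (norm_planarProj_le ω).trans_eq hω.1
  have hφ := integral_planarProj (.of_bound continuous_planarProj.aestronglyMeasurable 1 hle)
  simpa only [secondMoment_planarProj, one_pow] using
    quarter_moment_eigenvector_boundary_general hle hφ
      (by simpa [EuclideanSpace.norm_eq] using hnorm)
end
end

section
/- Let φ = (φ₁, φ₂) ∈ ℝ² with φ₁, φ₂ ≥ 0 and 0 < ‖φ‖₂ ≤ 1, write r := ‖φ‖₂. Define χ₀ := −(2π − 3√2·π + 4)/(3π(√2 − 1)), χ := 1 − √2(1 − χ₀)·r, λ := χ·r² + (1 − χ)·r, α₁ := φ₁φ₂·(8/3 − 16/(3π))·(1 − r²), α₂ := λ − α₁, and the 2×2 matrix M := α₁·I + α₂·(φφᵀ)/r². Then there exists a finite nonnegative Borel measure μ on S², supported in the quarter-sphere S₊₊, with μ(S²) = 1, ∫_{S²} Ω dμ = φ and ∫_{S²} Ω Ωᵀ dμ = M. (Realizability of the first-order quarter-moment Kershaw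 closure QK₁.) -/
open MeasureTheory Real

noncomputable section

/-!
The realizable pairs (first moment, second moment) form a convex set containing `(z, z zᵀ)` for
every `z` in the quarter disk, because each such `z` lifts to the quarter-sphere. Write `φ = r u`
with `u` a unit vector, `n` for the quarter-turn of `u`, `k = 8/3 - 16/(3π)`, `c = √2 (1 - χ₀)` and
`b = r (1 + c (1 - r))`. Then `λ = r b`, and the prescribed second moment is `λ u uᵀ + α₁ n nᵀ`.

Two atoms on the chord of the quarter disk through `b u` perpendicular to `u`, at offsets `v₁ n` and
`-v₂ n`, have barycentre `b u` and second moment `b² u uᵀ + v₁ v₂ n nᵀ` for suitable weights, and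
mixing with an atom of weight `1 - r / b` at the origin brings `b u` to `φ` and `b²` to `λ`. It
remains to see that the chord is long enough for `v₁ v₂ = α₁ b / r`. This holds whenever
`c + k / 2 ≤ 1`, which is exactly what the construction requires at `φ₁ = φ₂` as `r → 1`.
-/

section RealizableMoments

variable {X ι : Type*} [MeasurableSpace X] {K : Set X} {Ω : X → ι → ℝ}

/-- The pairs of first and second moments of the vector-valued observable `Ω` under probability
measures concentrated on `K`. Integrability is part of the definition, so that no moment is the
junk value of a divergent integral. -/
def realizableMoments (K : Set X) (Ω : X → ι → ℝ) : Set ((ι → ℝ) × Matrix ι ι ℝ) :=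
  {m | ∃ μ : Measure X, IsProbabilityMeasure μ ∧ μ Kᶜ = 0 ∧
    (∀ i, Integrable (fun x ↦ Ω x i) μ ∧ ∫ x, Ω x i ∂μ = m.1 i) ∧
    ∀ i j, Integrable (fun x ↦ Ω x i * Ω x j) μ ∧ ∫ x, Ω x i * Ω x j ∂μ = m.2 i j}

lemma integrable_and_integral_convexCombination {μ ν : Measure X} {f : X → ℝ} {a b p q : ℝ}
    (ha : 0 ≤ a) (hb : 0 ≤ b) (hμ : Integrable f μ ∧ ∫ x, f x ∂μ = p)
    (hν : Integrable f ν ∧ ∫ x, f x ∂ν = q) :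
    Integrable f (ENNReal.ofReal a • μ + ENNReal.ofReal b • ν) ∧
      ∫ x, f x ∂(ENNReal.ofReal a • μ + ENNReal.ofReal b • ν) = a * p + b * q := by
  have hfμ := hμ.1.smul_measure (ENNReal.ofReal_ne_top (r := a))
  have hfν := hν.1.smul_measure (ENNReal.ofReal_ne_top (r := b))
  refine ⟨hfμ.add_measure hfν, ?_⟩
  rw [integral_add_measure hfμ hfν, integral_smul_measure, integral_smul_measure, hμ.2, hν.2,
    ENNReal.toReal_ofReal ha, ENNReal.toReal_ofReal hb, smul_eq_mul, smul_eq_mul]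

lemma convex_realizableMoments (K : Set X) (Ω : X → ι → ℝ) :
    Convex ℝ (realizableMoments K Ω) := by
  rintro m ⟨μ, hμ, hμK, hμ₁, hμ₂⟩ m' ⟨ν, hν, hνK, hν₁, hν₂⟩ a b ha hb hab
  refine ⟨ENNReal.ofReal a • μ + ENNReal.ofReal b • ν, ⟨?_⟩, ?_, fun i ↦ ?_, fun i j ↦ ?_⟩
  · simp [← ENNReal.ofReal_add ha hb, hab]
  · simp [hμK, hνK]
  · exact integrable_and_integral_convexCombination ha hb (hμ₁ i) (hν₁ i)
  · exact integrable_and_integral_convexCombination ha hb (hμ₂ i j) (hν₂ i j)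

variable [MeasurableSingletonClass X]

lemma atom_mem_realizableMoments {z : ι → ℝ} (hz : z ∈ Ω '' K) :
    (z, Matrix.vecMulVec z z) ∈ realizableMoments K Ω := by
  obtain ⟨x, hx, rfl⟩ := hz
  refine ⟨Measure.dirac x, inferInstance, ?_, fun i ↦ ⟨integrable_dirac enorm_lt_top, ?_⟩,
    fun i j ↦ ⟨integrable_dirac enorm_lt_top, ?_⟩⟩
  · simp [hx]
  · simp
  · simp [Matrix.vecMulVec_apply]

lemma two_atoms_mem_realizableMoments {z n : ι → ℝ} {v₁ v₂ : ℝ} (hv₁ : 0 < v₁) (hv₂ : 0 < v₂)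
    (h₁ : z + v₁ • n ∈ Ω '' K) (h₂ : z - v₂ • n ∈ Ω '' K) :
    (z, Matrix.vecMulVec z z + (v₁ * v₂) • Matrix.vecMulVec n n) ∈ realizableMoments K Ω := by
  have hmix := convex_realizableMoments K Ω (atom_mem_realizableMoments h₁)
    (atom_mem_realizableMoments h₂) (a := v₂ / (v₁ + v₂)) (b := v₁ / (v₁ + v₂))
    (by positivity) (by positivity) (by field_simp; ring)
  convert hmix using 1
  ext i j
  · simp only [Prod.fst_add, Prod.smul_fst, Pi.add_apply, Pi.sub_apply, Pi.smul_apply, smul_eq_mul]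
    field_simp
    ring
  · simp only [Prod.snd_add, Prod.smul_snd, Matrix.add_apply, Matrix.smul_apply,
      Matrix.vecMulVec_apply, Pi.add_apply, Pi.sub_apply, Pi.smul_apply, smul_eq_mul]
    field_simp
    ring

lemma chord_mem_realizableMoments {z n : ι → ℝ} {v₁ v₂ V : ℝ} (hv₁ : 0 ≤ v₁) (hv₂ : 0 ≤ v₂)
    (hz : z ∈ Ω '' K) (h₁ : z + v₁ • n ∈ Ω '' K) (h₂ : z - v₂ • n ∈ Ω '' K)
    (hV₀ : 0 ≤ V) (hV : V ≤ v₁ * v₂) :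
    (z, Matrix.vecMulVec z z + V • Matrix.vecMulVec n n) ∈ realizableMoments K Ω := by
  rcases hV₀.eq_or_lt with rfl | hV_pos
  · simpa using atom_mem_realizableMoments hz
  have hv : 0 < v₁ * v₂ := hV_pos.trans_le hV
  have htwo := two_atoms_mem_realizableMoments (pos_of_mul_pos_left hv hv₂)
    (pos_of_mul_pos_right hv hv₁) h₁ h₂
  have hmix := convex_realizableMoments K Ω (atom_mem_realizableMoments hz) htwo
    (a := 1 - V / (v₁ * v₂)) (b := V / (v₁ * v₂))
    (sub_nonneg.2 <| (div_le_one hv).2 hV) (by positivity) (by ring)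
  convert hmix using 1
  ext i j
  · simp only [Prod.fst_add, Prod.smul_fst, Pi.add_apply, Pi.smul_apply, smul_eq_mul]
    ring
  · have hV_eq : V = V / (v₁ * v₂) * (v₁ * v₂) := (div_mul_cancel₀ V hv.ne').symm
    simp only [Prod.snd_add, Prod.smul_snd, Matrix.add_apply, Matrix.smul_apply, smul_eq_mul]
    linear_combination Matrix.vecMulVec n n i j * hV_eq

end RealizableMoments

section QuarterSphere

/-- The quarter-sphere `S₊₊`. -/
def quarterSphere : Set (EuclideanSpace ℝ (Fin 3)) :=
  {ω | ‖ω‖ = 1 ∧ 0 ≤ ω 0 ∧ 0 ≤ ω 1}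

/-- The projection `Ω` onto the first two coordinates. -/
def planarProjection (ω : EuclideanSpace ℝ (Fin 3)) : Fin 2 → ℝ :=
  ![ω 0, ω 1]

/-- The closed quarter of the Euclidean unit disk, which is where `planarProjection` maps
`quarterSphere`. It is given by coordinates because `Fin 2 → ℝ` carries the sup norm. -/
def quarterDisk : Set (Fin 2 → ℝ) :=
  {z | 0 ≤ z 0 ∧ 0 ≤ z 1 ∧ z 0 ^ 2 + z 1 ^ 2 ≤ 1}

lemma quarterDisk_subset_image_quarterSphere :
    quarterDisk ⊆ planarProjection '' quarterSphere := by
  rintro z ⟨hz₀, hz₁, hz⟩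
  refine ⟨!₂[z 0, z 1, √(1 - z 0 ^ 2 - z 1 ^ 2)], ⟨?_, by simpa, by simpa⟩, ?_⟩
  · have hsq : √(1 - z 0 ^ 2 - z 1 ^ 2) ^ 2 = 1 - z 0 ^ 2 - z 1 ^ 2 := sq_sqrt (by linarith)
    simp [EuclideanSpace.norm_eq, Fin.sum_univ_three, hsq]
  · ext i
    fin_cases i <;> rfl

/-- The counterclockwise rotation of a plane vector by a right angle. -/
def quarterTurn (u : Fin 2 → ℝ) : Fin 2 → ℝ :=
  ![-u 1, u 0]

lemma vecMulVec_quarterTurn (u : Fin 2 → ℝ) :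
    Matrix.vecMulVec (quarterTurn u) (quarterTurn u) =
      (u 0 ^ 2 + u 1 ^ 2) • (1 : Matrix (Fin 2) (Fin 2) ℝ) - Matrix.vecMulVec u u := by
  ext i j
  fin_cases i <;> fin_cases j <;> simp [quarterTurn, Matrix.vecMulVec_apply] <;> ring

variable {u : Fin 2 → ℝ}

lemma smul_add_smul_quarterTurn_mem_quarterDisk_iff (hu : u 0 ^ 2 + u 1 ^ 2 = 1) {b v : ℝ} :
    b • u + v • quarterTurn u ∈ quarterDisk ↔
      v * u 1 ≤ b * u 0 ∧ -(v * u 0) ≤ b * u 1 ∧ b ^ 2 + v ^ 2 ≤ 1 := by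
  have hnorm : (b * u 0 - v * u 1) ^ 2 + (b * u 1 + v * u 0) ^ 2 = b ^ 2 + v ^ 2 := by
    linear_combination (b ^ 2 + v ^ 2) * hu
  have hx : (b • u + v • quarterTurn u) 0 = b * u 0 - v * u 1 := by
    simp [quarterTurn, sub_eq_add_neg]
  have hy : (b • u + v • quarterTurn u) 1 = b * u 1 + v * u 0 := by
    simp [quarterTurn]
  rw [quarterDisk, Set.mem_ofPred_eq, hx, hy, hnorm, sub_nonneg, neg_le_iff_add_nonneg]

/-- The two factors are the lengths of the half-chords of the quarter disk which start at `b u` and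
are perpendicular to `u`: each ends on a coordinate axis or on the unit circle. -/
lemma le_mul_halfChords (hu₀ : 0 < u 0) (hu₁ : 0 < u 1) (hu : u 0 ^ 2 + u 1 ^ 2 = 1) {b w d : ℝ}
    (hb : 0 ≤ b) (hw : 0 ≤ w) (hd₀ : 0 ≤ d) (hdb : d ≤ 2 * b) (hdw : d ≤ w)
    (hbd : b * d ≤ 2 * w ^ 2) :
    u 0 * u 1 * (b * d) ≤ min (b * u 0 / u 1) w * min (b * u 1 / u 0) w := by
  have hprod : u 0 * u 1 ≤ 1 / 2 := by nlinarith [sq_nonneg (u 0 - u 1)]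
  have hsq_mul_le {s : ℝ} (hs : s ^ 2 ≤ 1) : s ^ 2 * d ≤ w :=
    (mul_le_of_le_one_left hd₀ hs).trans hdw
  have axis_axis : u 0 * u 1 * (b * d) ≤ b * u 0 / u 1 * (b * u 1 / u 0) :=
    calc u 0 * u 1 * (b * d) ≤ 1 / 2 * (b * (2 * b)) := by gcongr
      _ = b * u 0 / u 1 * (b * u 1 / u 0) := by field_simp
  have axis_circle : u 0 * u 1 * (b * d) ≤ b * u 0 / u 1 * w :=
    calc u 0 * u 1 * (b * d) = b * u 0 / u 1 * (u 1 ^ 2 * d) := by field_simp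
      _ ≤ b * u 0 / u 1 * w := by gcongr; exact hsq_mul_le (by nlinarith)
  have circle_axis : u 0 * u 1 * (b * d) ≤ w * (b * u 1 / u 0) :=
    calc u 0 * u 1 * (b * d) = u 0 ^ 2 * d * (b * u 1 / u 0) := by field_simp
      _ ≤ w * (b * u 1 / u 0) := by gcongr; exact hsq_mul_le (by nlinarith)
  have circle_circle : u 0 * u 1 * (b * d) ≤ w * w :=
    calc u 0 * u 1 * (b * d) ≤ 1 / 2 * (2 * w ^ 2) := by gcongr
      _ = w * w := by ring
  rw [min_mul_of_nonneg _ _ (by positivity), mul_min_of_nonneg _ _ (by positivity),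
    mul_min_of_nonneg _ _ hw]
  exact le_min (le_min axis_axis axis_circle) (le_min circle_axis circle_circle)

lemma perpendicular_chord_mem_realizableMoments (hu₀ : 0 ≤ u 0) (hu₁ : 0 ≤ u 1)
    (hu : u 0 ^ 2 + u 1 ^ 2 = 1) {b d : ℝ} (hb₀ : 0 ≤ b) (hd₀ : 0 ≤ d)
    (hdb : d ≤ 2 * b) (hdw : d ^ 2 ≤ 1 - b ^ 2) (hbd : b * d ≤ 2 * (1 - b ^ 2)) :
    (b • u, Matrix.vecMulVec (b • u) (b • u) +
        (u 0 * u 1 * (b * d)) • Matrix.vecMulVec (quarterTurn u) (quarterTurn u)) ∈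
      realizableMoments quarterSphere planarProjection := by
  set w := √(1 - b ^ 2)
  have hw₀ : 0 ≤ w := sqrt_nonneg _
  have hw : w ^ 2 = 1 - b ^ 2 := sq_sqrt ((sq_nonneg d).trans hdw)
  -- For `u` on a coordinate axis one half-chord degenerates; `x / 0 = 0` is its right length.
  set v₁ := min (b * u 0 / u 1) w
  set v₂ := min (b * u 1 / u 0) w
  have hv₁ : 0 ≤ v₁ := le_min (by positivity) hw₀
  have hv₂ : 0 ≤ v₂ := le_min (by positivity) hw₀
  have hv₁_axis : v₁ * u 1 ≤ b * u 0 :=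
    mul_le_of_le_div₀ (by positivity) hu₁ (min_le_left _ _)
  have hv₂_axis : v₂ * u 0 ≤ b * u 1 :=
    mul_le_of_le_div₀ (by positivity) hu₀ (min_le_left _ _)
  have hv₁_circle : v₁ ^ 2 ≤ w ^ 2 := pow_le_pow_left₀ hv₁ (min_le_right _ _) 2
  have hv₂_circle : v₂ ^ 2 ≤ w ^ 2 := pow_le_pow_left₀ hv₂ (min_le_right _ _) 2
  have hlength : u 0 * u 1 * (b * d) ≤ v₁ * v₂ := by
    rcases hu₀.eq_or_lt with h₀ | h₀
    · simpa [← h₀] using mul_nonneg hv₁ hv₂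
    rcases hu₁.eq_or_lt with h₁ | h₁
    · simpa [← h₁] using mul_nonneg hv₁ hv₂
    exact le_mul_halfChords h₀ h₁ hu hb₀ hw₀ hd₀ hdb (le_sqrt_of_sq_le hdw) (by rwa [hw])
  have hmem (v : ℝ) (h₀ : v * u 1 ≤ b * u 0) (h₁ : -(v * u 0) ≤ b * u 1) (h : v ^ 2 ≤ w ^ 2) :
      b • u + v • quarterTurn u ∈ planarProjection '' quarterSphere :=
    quarterDisk_subset_image_quarterSphere <|
      (smul_add_smul_quarterTurn_mem_quarterDisk_iff hu).2 ⟨h₀, h₁, by linarith⟩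
  refine chord_mem_realizableMoments hv₁ hv₂ ?_ (hmem v₁ hv₁_axis ?_ hv₁_circle) ?_
    (by positivity) hlength
  · simpa using hmem 0 (by simpa using mul_nonneg hb₀ hu₀) (by simpa using mul_nonneg hb₀ hu₁)
      (by simpa using sq_nonneg w)
  · exact (neg_nonpos.2 (mul_nonneg hv₁ hu₀)).trans (mul_nonneg hb₀ hu₁)
  · have hmem₂ := hmem (-v₂)
      (by linarith [mul_nonneg hv₂ hu₁, mul_nonneg hb₀ hu₀]) (by linarith)
      (by simpa using hv₂_circle)
    simpa [sub_eq_add_neg] using hmem₂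

lemma smul_mem_realizableMoments_quarterSphere {m : (Fin 2 → ℝ) × Matrix (Fin 2) (Fin 2) ℝ}
    (hm : m ∈ realizableMoments quarterSphere planarProjection) {t : ℝ} (ht : t ∈ Set.Icc 0 1) :
    t • m ∈ realizableMoments quarterSphere planarProjection := by
  have hzero : (0 : Fin 2 → ℝ) ∈ quarterDisk := by simp [quarterDisk]
  have hatom := atom_mem_realizableMoments (quarterDisk_subset_image_quarterSphere hzero)
  rw [Matrix.zero_vecMulVec] at hatom
  exact (convex_realizableMoments _ _).smul_mem_of_zero_mem hatom hm ht

end QuarterSphere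

section KershawClosure

/-- The distance `b` from the origin at which the chord carrying the two nonzero atoms is placed,
chosen so that the Kershaw eigenvalue is `λ = r b`. -/
def chordRadius (c r : ℝ) : ℝ :=
  r * (1 + c * (1 - r))

variable {c k r : ℝ}

lemma le_chordRadius (hc₀ : 0 ≤ c) (hr₀ : 0 ≤ r) (hr₁ : r ≤ 1) : r ≤ chordRadius c r :=
  le_mul_of_one_le_right hr₀ <| le_add_of_nonneg_right <| mul_nonneg hc₀ <| sub_nonneg.2 hr₁

lemma one_sub_chordRadius (c r : ℝ) : 1 - chordRadius c r = (1 - c * r) * (1 - r) := by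
  rw [chordRadius]
  ring

lemma mul_one_sub_sq_le_one_sub_chordRadius_sq (hc₀ : 0 ≤ c) (hc₁ : c ≤ 1) (hr₀ : 0 ≤ r)
    (hr₁ : r ≤ 1) : (1 - c) * (1 - r ^ 2) ≤ 1 - chordRadius c r ^ 2 := by
  have hcr : c * r ≤ c := mul_le_of_le_one_right hc₀ hr₁
  calc (1 - c) * (1 - r ^ 2) = (1 - c) * (1 - r) * (1 + r) := by ring
    _ ≤ (1 - c * r) * (1 - r) * (1 + chordRadius c r) := by
        gcongr
        · exact mul_nonneg (by linarith) (by linarith)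
        · exact le_chordRadius hc₀ hr₀ hr₁
    _ = 1 - chordRadius c r ^ 2 := by rw [← one_sub_chordRadius]; ring

lemma kershaw_chord_mem_realizableMoments {u : Fin 2 → ℝ} (hu₀ : 0 ≤ u 0) (hu₁ : 0 ≤ u 1)
    (hu : u 0 ^ 2 + u 1 ^ 2 = 1) (hr₀ : 0 ≤ r) (hr₁ : r ≤ 1) (hc₀ : 0 ≤ c) (hk₀ : 0 ≤ k)
    (hck : c + k / 2 ≤ 1) :
    (chordRadius c r • u, Matrix.vecMulVec (chordRadius c r • u) (chordRadius c r • u) +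
        (u 0 * u 1 * (chordRadius c r * (k * r * (1 - r ^ 2)))) •
          Matrix.vecMulVec (quarterTurn u) (quarterTurn u)) ∈
      realizableMoments quarterSphere planarProjection := by
  have hr_sq : 0 ≤ 1 - r ^ 2 := by nlinarith
  have hrb := le_chordRadius hc₀ hr₀ hr₁
  have hc₁ : 0 ≤ 1 - c := by linarith
  have hkc : k ≤ 2 * (1 - c) := by linarith
  have hb := mul_one_sub_sq_le_one_sub_chordRadius_sq hc₀ (sub_nonneg.1 hc₁) hr₀ hr₁
  set b := chordRadius c r
  have hb₀ : 0 ≤ b := hr₀.trans hrb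
  have hb₁ : b ≤ 1 :=
    (sq_le_one_iff₀ hb₀).1 <| sub_nonneg.1 <| (mul_nonneg hc₁ hr_sq).trans hb
  apply perpendicular_chord_mem_realizableMoments hu₀ hu₁ hu hb₀ (by positivity)
  · calc k * r * (1 - r ^ 2) ≤ 2 * b * 1 := by gcongr <;> nlinarith
      _ = 2 * b := mul_one _
  · have hquarter : r ^ 2 * (1 - r ^ 2) ≤ 1 / 4 := by nlinarith [sq_nonneg (r ^ 2 - 1 / 2)]
    calc (k * r * (1 - r ^ 2)) ^ 2 = k ^ 2 * (r ^ 2 * (1 - r ^ 2)) * (1 - r ^ 2) := by ring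
      _ ≤ (2 * (1 - c)) ^ 2 * (1 / 4) * (1 - r ^ 2) := by gcongr
      _ = (1 - c) * (1 - c) * (1 - r ^ 2) := by ring
      _ ≤ 1 * (1 - c) * (1 - r ^ 2) := by gcongr; linarith
      _ ≤ 1 - b ^ 2 := by rwa [one_mul]
  · calc b * (k * r * (1 - r ^ 2)) ≤ 1 * (2 * (1 - c) * 1 * (1 - r ^ 2)) := by gcongr
      _ = 2 * ((1 - c) * (1 - r ^ 2)) := by ring
      _ ≤ 2 * (1 - b ^ 2) := by gcongr

lemma kershaw_polar_mem_realizableMoments {u : Fin 2 → ℝ} (hu₀ : 0 ≤ u 0) (hu₁ : 0 ≤ u 1)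
    (hu : u 0 ^ 2 + u 1 ^ 2 = 1) (hr₀ : 0 < r) (hr₁ : r ≤ 1) (hc₀ : 0 ≤ c) (hk₀ : 0 ≤ k)
    (hck : c + k / 2 ≤ 1) :
    (r • u, (r * chordRadius c r) • Matrix.vecMulVec u u +
        (r * u 0 * (r * u 1) * k * (1 - r ^ 2)) •
          Matrix.vecMulVec (quarterTurn u) (quarterTurn u)) ∈
      realizableMoments quarterSphere planarProjection := by
  have hrb := le_chordRadius hc₀ hr₀.le hr₁
  have hchord := kershaw_chord_mem_realizableMoments hu₀ hu₁ hu hr₀.le hr₁ hc₀ hk₀ hck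
  set b := chordRadius c r
  have hb₀ : 0 < b := hr₀.trans_le hrb
  have hmix := smul_mem_realizableMoments_quarterSphere hchord (t := r / b)
    ⟨by positivity, (div_le_one hb₀).2 hrb⟩
  convert hmix using 1
  ext i j
  · simp only [Prod.smul_fst, Pi.smul_apply, smul_eq_mul]
    field_simp
  · simp only [Prod.smul_snd, Matrix.add_apply, Matrix.smul_apply, Matrix.vecMulVec_apply,
      Pi.smul_apply, smul_eq_mul]
    field_simp

lemma kershaw_mem_realizableMoments {φ : Fin 2 → ℝ} (hφ₀ : 0 ≤ φ 0) (hφ₁ : 0 ≤ φ 1)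
    (hφ : φ 0 ^ 2 + φ 1 ^ 2 = r ^ 2) (hr₀ : 0 < r) (hr₁ : r ≤ 1) (hc₀ : 0 ≤ c) (hk₀ : 0 ≤ k)
    (hck : c + k / 2 ≤ 1) {α : ℝ} (hα : α = φ 0 * φ 1 * k * (1 - r ^ 2)) :
    (φ, α • (1 : Matrix (Fin 2) (Fin 2) ℝ) +
        ((r * chordRadius c r - α) / r ^ 2) • Matrix.vecMulVec φ φ) ∈
      realizableMoments quarterSphere planarProjection := by
  obtain ⟨u, rfl⟩ : ∃ u : Fin 2 → ℝ, φ = r • u := ⟨r⁻¹ • φ, by simp [hr₀.ne']⟩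
  simp only [Pi.smul_apply, smul_eq_mul] at hφ₀ hφ₁ hφ hα
  have hu₀ : 0 ≤ u 0 := nonneg_of_mul_nonneg_right hφ₀ hr₀
  have hu₁ : 0 ≤ u 1 := nonneg_of_mul_nonneg_right hφ₁ hr₀
  have hu : u 0 ^ 2 + u 1 ^ 2 = 1 :=
    mul_left_cancel₀ (pow_ne_zero 2 hr₀.ne') (by linear_combination hφ)
  have hpolar := kershaw_polar_mem_realizableMoments hu₀ hu₁ hu hr₀ hr₁ hc₀ hk₀ hck
  rw [← hα, vecMulVec_quarterTurn, hu, one_smul] at hpolar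
  convert hpolar using 2
  rw [Matrix.smul_vecMulVec, Matrix.vecMulVec_smul, smul_smul, smul_smul,
    show (r * chordRadius c r - α) / r ^ 2 * r * r = r * chordRadius c r - α by field_simp]
  module

end KershawClosure

section KershawConstants

lemma kershaw_slope_eq :
    √2 * (1 - -(2 * π - 3 * √2 * π + 4) / (3 * π * (√2 - 1))) =
      (2 + √2) * (4 - π) / (3 * π) := by
  have hsq : √2 ^ 2 = 2 := sq_sqrt zero_le_two
  have hne : √2 - 1 ≠ 0 := (sub_pos.2 one_lt_sqrt_two).ne'
  field_simp
  linear_combination (π - 4) * hsq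

lemma kershaw_slope_nonneg : 0 ≤ (2 + √2) * (4 - π) / (3 * π) :=
  div_nonneg (mul_nonneg (by positivity) (sub_nonneg.2 pi_le_four)) (by positivity)

lemma kershaw_slope_le_half : (2 + √2) * (4 - π) / (3 * π) ≤ 1 / 2 := by
  have hsqrt : √2 ≤ 3 / 2 := sqrt_le_iff.2 (by norm_num)
  rw [div_le_iff₀ (by positivity)]
  nlinarith [pi_gt_three, pi_le_four]

lemma kershaw_offset_nonneg : 0 ≤ 8 / 3 - 16 / (3 * π) := by
  rw [sub_nonneg, div_le_iff₀ (by positivity)]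
  linarith [pi_gt_three]

lemma kershaw_offset_le_one : 8 / 3 - 16 / (3 * π) ≤ 1 := by
  rw [sub_le_comm, le_div_iff₀ (by positivity)]
  linarith [pi_lt_d2]

end KershawConstants

theorem QK1_closure_realizable_general
    (φ₁ φ₂ r c k χ lam α₁ α₂ : ℝ)
    (hφ₁ : 0 ≤ φ₁) (hφ₂ : 0 ≤ φ₂)
    (hr : r = √(φ₁ ^ 2 + φ₂ ^ 2)) (hr0 : 0 < r) (hr1 : r ≤ 1)
    (hc : 0 ≤ c) (hk : 0 ≤ k) (hck : c + k / 2 ≤ 1)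
    (hχ : χ = 1 - c * r)
    (hlam : lam = χ * r ^ 2 + (1 - χ) * r)
    (hα₁ : α₁ = φ₁ * φ₂ * k * (1 - r ^ 2))
    (hα₂ : α₂ = lam - α₁) :
    ∃ μ : Measure (EuclideanSpace ℝ (Fin 3)), IsFiniteMeasure μ ∧
      μ {ω | ¬ (‖ω‖ = 1 ∧ 0 ≤ ω 0 ∧ 0 ≤ ω 1)} = 0 ∧
      μ Set.univ = 1 ∧
      (∫ ω, ω 0 ∂μ) = φ₁ ∧ (∫ ω, ω 1 ∂μ) = φ₂ ∧
      !![∫ ω, ω 0 * ω 0 ∂μ, ∫ ω, ω 0 * ω 1 ∂μ;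
         ∫ ω, ω 1 * ω 0 ∂μ, ∫ ω, ω 1 * ω 1 ∂μ] =
        α₁ • (1 : Matrix (Fin 2) (Fin 2) ℝ) +
          (α₂ / r ^ 2) • Matrix.vecMulVec ![φ₁, φ₂] ![φ₁, φ₂] := by
  have hφ : φ₁ ^ 2 + φ₂ ^ 2 = r ^ 2 := by rw [hr, sq_sqrt (by positivity)]
  have hlam_eq : lam = r * chordRadius c r := by rw [hlam, hχ, chordRadius]; ring
  obtain ⟨μ, hμ, hsupp, hfirst, hsecond⟩ :=
    kershaw_mem_realizableMoments (φ := ![φ₁, φ₂]) hφ₁ hφ₂ hφ hr0 hr1 hc hk hck hα₁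
  refine ⟨μ, inferInstance, hsupp, measure_univ, (hfirst 0).2, (hfirst 1).2, ?_⟩
  rw [hα₂, hlam_eq]
  ext i j
  fin_cases i <;> fin_cases j
  exacts [(hsecond 0 0).2, (hsecond 0 1).2, (hsecond 1 0).2, (hsecond 1 1).2]

/-- Realizability of the first-order quarter-moment Kershaw closure `QK₁`: for every normalized
first moment `φ = (φ₁, φ₂)` in the quarter disk (with `0 < r = ‖φ‖₂ ≤ 1`) there is a probability
measure supported in the quarter-sphere `S₊₊` with first moment `φ` and second moment
`α₁ I + (α₂/r²) φ φᵀ` given by the Kershaw coefficients. -/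
theorem QK1_closure_realizable
    (φ₁ φ₂ r χ₀ χ lam α₁ α₂ : ℝ)
    (hφ₁ : 0 ≤ φ₁) (hφ₂ : 0 ≤ φ₂)
    (hr : r = Real.sqrt (φ₁ ^ 2 + φ₂ ^ 2)) (hr0 : 0 < r) (hr1 : r ≤ 1)
    (hχ₀ : χ₀ = -(2 * π - 3 * Real.sqrt 2 * π + 4) / (3 * π * (Real.sqrt 2 - 1)))
    (hχ : χ = 1 - Real.sqrt 2 * (1 - χ₀) * r)
    (hlam : lam = χ * r ^ 2 + (1 - χ) * r)
    (hα₁ : α₁ = φ₁ * φ₂ * (8 / 3 - 16 / (3 * π)) * (1 - r ^ 2))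
    (hα₂ : α₂ = lam - α₁) :
    ∃ μ : Measure (EuclideanSpace ℝ (Fin 3)), IsFiniteMeasure μ ∧
      μ {ω | ¬ (‖ω‖ = 1 ∧ 0 ≤ ω 0 ∧ 0 ≤ ω 1)} = 0 ∧
      μ Set.univ = 1 ∧
      (∫ ω, ω 0 ∂μ) = φ₁ ∧ (∫ ω, ω 1 ∂μ) = φ₂ ∧
      !![∫ ω, ω 0 * ω 0 ∂μ, ∫ ω, ω 0 * ω 1 ∂μ;
         ∫ ω, ω 1 * ω 0 ∂μ, ∫ ω, ω 1 * ω 1 ∂μ] =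
        α₁ • (1 : Matrix (Fin 2) (Fin 2) ℝ) +
          (α₂ / r ^ 2) • Matrix.vecMulVec ![φ₁, φ₂] ![φ₁, φ₂] := by
  have hslope : √2 * (1 - χ₀) = (2 + √2) * (4 - π) / (3 * π) := hχ₀ ▸ kershaw_slope_eq
  exact QK1_closure_realizable_general φ₁ φ₂ r _ _ χ lam α₁ α₂ hφ₁ hφ₂ hr hr0 hr1
    kershaw_slope_nonneg kershaw_offset_nonneg
    (by linarith [kershaw_slope_le_half, kershaw_offset_le_one]) (hslope ▸ hχ) hlam hα₁ hα₂
end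
end

section
/- Let a, b ≥ 0 be integers with a + b = k, and define f : (−1, 1) × ℝ → ℝ by f(μ, ϕ) := (√(1−μ²) cos ϕ)^a · (√(1−μ²) sin ϕ)^b. Then for all μ ∈ (−1, 1) and ϕ ∈ ℝ: ∂/∂μ[(1 − μ²)·∂f/∂μ](μ, ϕ) + (1/(1 − μ²))·∂²f/∂ϕ²(μ, ϕ) = −k(k+1)·f(μ, ϕ) + a(a−1)·(√(1−μ²) cos ϕ)^{a−2}(√(1−μ²) sin ϕ)^b + b(b−1)·(√(1−μ²) cos ϕ)^a(√(1−μ²) sin ϕ)^{b−2}, where the terms with coefficient a(a−1) resp. b(b−1) are understood to vanish when a ≤ 1 resp. b ≤ 1. -/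
open Real

noncomputable section

/-- The spherical monomial `Ω₁^a Ω₂^b` in the parametrization
`Ω = (√(1−μ²) cos ϕ, √(1−μ²) sin ϕ)`. -/
def sphMonomial (a b : ℕ) (m p : ℝ) : ℝ :=
    (Real.sqrt (1 - m ^ 2) * Real.cos p) ^ a * (Real.sqrt (1 - m ^ 2) * Real.sin p) ^ b

/-!
Separate variables: with `k = a + b` the monomial is `√(1-μ²)^k · cos^a ϕ sin^b ϕ`. The polar factor
solves the associated Legendre equation of degree and order `k`,
`((1-μ²) g')' = -k(k+1) g + k²/(1-μ²) g`, while the azimuthal factor `h` satisfies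
`h'' = -k² h + a(a-1) cos^(a-2) sin^b + b(b-1) cos^a sin^(b-2)`. The two `k²/(1-μ²)` terms cancel,
and the remaining factor `1/(1-μ²)` lowers the power of `√(1-μ²)` by two.
-/

lemma natCast_mul_pow_sub_one_mul_self {R : Type*} [Semiring R] (n : ℕ) (x : R) :
    (n : R) * (x ^ (n - 1) * x) = n * x ^ n := by
  rcases eq_or_ne n 0 with rfl | hn
  · simp
  · rw [pow_sub_one_mul hn]

lemma natCast_mul_pred_mul_pow_sub_two_mul_sq {R : Type*} [Semiring R] (n : ℕ) (x : R) :
    ((n * (n - 1) : ℕ) : R) * (x ^ (n - 2) * x ^ 2) = ((n * (n - 1) : ℕ) : R) * x ^ n := by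
  match n with
  | 0 | 1 => simp
  | n + 2 => rw [Nat.add_sub_cancel, ← pow_add]

lemma natCast_mul_pred {R : Type*} [Ring R] (n : ℕ) :
    ((n * (n - 1) : ℕ) : R) = n * (n - 1) := by
  cases n <;> simp

lemma natCast_mul_pred_mul_pow_sub_two_mul_sq_of_sq_add_sq_eq_one {R : Type*} [CommRing R]
    (n : ℕ) {x y : R} (h : x ^ 2 + y ^ 2 = 1) :
    ((n * (n - 1) : ℕ) : R) * (x ^ (n - 2) * y ^ 2) =
      ((n * (n - 1) : ℕ) : R) * x ^ (n - 2) - n * (n - 1) * x ^ n := by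
  rw [← natCast_mul_pred, ← natCast_mul_pred_mul_pow_sub_two_mul_sq]
  linear_combination ((n * (n - 1) : ℕ) : R) * x ^ (n - 2) * h

lemma one_sub_sq_pos {R : Type*} [Ring R] [LinearOrder R] [IsStrictOrderedRing R] {x : R}
    (hx : x ∈ Set.Ioo (-1) 1) : 0 < 1 - x ^ 2 :=
  sub_pos.2 ((sq_lt_one_iff_abs_lt_one x).2 (abs_lt.2 hx))

/-- The Legendre operator `g ↦ ((1-μ²) g')'`, the polar part of the Laplace-Beltrami operator. -/
def legendreOp (g : ℝ → ℝ) (m : ℝ) : ℝ :=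
  deriv (fun x => (1 - x ^ 2) * deriv g x) m

/-- The Laplace-Beltrami operator on the unit sphere, acting on functions of `μ = cos θ` and the
azimuthal angle. It is meaningful for `μ ∈ (-1, 1)`, away from the poles. -/
def laplaceBeltrami (f : ℝ → ℝ → ℝ) (m p : ℝ) : ℝ :=
  legendreOp (fun x => f x p) m + 1 / (1 - m ^ 2) * deriv (deriv (f m)) p

lemma legendreOp_mul_const (g : ℝ → ℝ) (c m : ℝ) :
    legendreOp (fun x => g x * c) m = legendreOp g m * c := by
  simp only [legendreOp, deriv_mul_const_field', ← mul_assoc]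

lemma laplaceBeltrami_mul (g h : ℝ → ℝ) (m p : ℝ) :
    laplaceBeltrami (fun x q => g x * h q) m p =
      legendreOp g m * h p + 1 / (1 - m ^ 2) * (g m * deriv (deriv h) p) := by
  simp only [laplaceBeltrami, legendreOp_mul_const, deriv_const_mul_field']

lemma hasDerivAt_sqrt_pow (k : ℕ) {x : ℝ} (hx : 0 < x) :
    HasDerivAt (fun y => √y ^ k) (k * √x ^ k / (2 * x)) x := by
  refine ((hasDerivAt_sqrt hx.ne').fun_pow k).congr_deriv ?_
  have hs : √x ≠ 0 := (sqrt_pos.2 hx).ne'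
  have hsq : √x ^ 2 = x := sq_sqrt hx.le
  rw [← natCast_mul_pow_sub_one_mul_self]
  field_simp
  rw [hsq]

lemma hasDerivAt_sqrt_one_sub_sq_pow (k : ℕ) {m : ℝ} (hm : m ∈ Set.Ioo (-1 : ℝ) 1) :
    HasDerivAt (fun x => √(1 - x ^ 2) ^ k) (-(k * m * √(1 - m ^ 2) ^ k / (1 - m ^ 2))) m := by
  have hinner : HasDerivAt (fun x : ℝ => 1 - x ^ 2) (-(2 * m)) m := by
    simpa using (hasDerivAt_pow 2 m).const_sub 1
  have hpos := one_sub_sq_pos hm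
  refine ((hasDerivAt_sqrt_pow k hpos).comp m hinner).congr_deriv ?_
  field_simp

lemma legendreOp_sqrt_one_sub_sq_pow (k : ℕ) {m : ℝ} (hm : m ∈ Set.Ioo (-1 : ℝ) 1) :
    legendreOp (fun x => √(1 - x ^ 2) ^ k) m =
      (-(k * (k + 1)) + k ^ 2 / (1 - m ^ 2)) * √(1 - m ^ 2) ^ k := by
  have hflux : (fun x => (1 - x ^ 2) * deriv (fun y => √(1 - y ^ 2) ^ k) x)
      =ᶠ[nhds m] fun x => -k * (x * √(1 - x ^ 2) ^ k) := by
    filter_upwards [Ioo_mem_nhds hm.1 hm.2] with x hx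
    have hpos := one_sub_sq_pos hx
    rw [(hasDerivAt_sqrt_one_sub_sq_pow k hx).deriv]
    field_simp
  have hderiv :=
    ((hasDerivAt_id' m).fun_mul (hasDerivAt_sqrt_one_sub_sq_pow k hm)).const_mul (-k : ℝ)
  have hpos := one_sub_sq_pos hm
  rw [legendreOp, hflux.deriv_eq, hderiv.deriv]
  field_simp
  ring

lemma hasDerivAt_cos_pow_mul_sin_pow (a b : ℕ) (p : ℝ) :
    HasDerivAt (fun q => cos q ^ a * sin q ^ b)
      (-a * (cos p ^ (a - 1) * sin p ^ (b + 1)) + b * (cos p ^ (a + 1) * sin p ^ (b - 1))) p := by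
  refine (((hasDerivAt_cos p).fun_pow a).fun_mul ((hasDerivAt_sin p).fun_pow b)).congr_deriv ?_
  ring

lemma deriv_deriv_cos_pow_mul_sin_pow (a b : ℕ) (p : ℝ) :
    deriv (deriv fun q => cos q ^ a * sin q ^ b) p =
      -((a + b : ℝ) ^ 2) * (cos p ^ a * sin p ^ b) +
        ((a * (a - 1) : ℕ) : ℝ) * (cos p ^ (a - 2) * sin p ^ b) +
        ((b * (b - 1) : ℕ) : ℝ) * (cos p ^ a * sin p ^ (b - 2)) := by
  have hfirst : deriv (fun q => cos q ^ a * sin q ^ b) = fun q =>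
      -a * (cos q ^ (a - 1) * sin q ^ (b + 1)) + b * (cos q ^ (a + 1) * sin q ^ (b - 1)) :=
    funext fun q => (hasDerivAt_cos_pow_mul_sin_pow a b q).deriv
  have hsecond := ((hasDerivAt_cos_pow_mul_sin_pow (a - 1) (b + 1) p).const_mul (-a : ℝ)).fun_add
    ((hasDerivAt_cos_pow_mul_sin_pow (a + 1) (b - 1) p).const_mul (b : ℝ))
  rw [hfirst, hsecond.deriv]
  have hcos := natCast_mul_pow_sub_one_mul_self a (cos p)
  have hsin := natCast_mul_pow_sub_one_mul_self b (sin p)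
  have hcos₂ :=
    natCast_mul_pred_mul_pow_sub_two_mul_sq_of_sq_add_sq_eq_one a (cos_sq_add_sin_sq p)
  have hsin₂ :=
    natCast_mul_pred_mul_pow_sub_two_mul_sq_of_sq_add_sq_eq_one b (sin_sq_add_cos_sq p)
  simp only [Nat.sub_sub, Nat.add_sub_cancel, Nat.reduceAdd, Nat.cast_mul, Nat.cast_add,
    Nat.cast_one] at hcos₂ hsin₂ ⊢
  linear_combination sin p ^ b * hcos₂ + cos p ^ a * hsin₂
    - (b + 1) * sin p ^ b * hcos - (a + 1) * cos p ^ a * hsin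

lemma sphMonomial_eq_mul (a b : ℕ) (m p : ℝ) :
    sphMonomial a b m p = √(1 - m ^ 2) ^ (a + b) * (cos p ^ a * sin p ^ b) := by
  rw [sphMonomial]
  ring

/-- Action of the Laplace-Beltrami operator
`Δf = ∂_μ((1−μ²) ∂_μ f) + (1−μ²)⁻¹ ∂²_ϕ f` on the spherical monomials `Ω₁^a Ω₂^b` with
`a + b = k`:
`Δ(Ω₁^a Ω₂^b) = −k(k+1) Ω₁^a Ω₂^b + a(a−1) Ω₁^{a−2} Ω₂^b + b(b−1) Ω₁^a Ω₂^{b−2}`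
(the last two terms vanish when `a ≤ 1` resp. `b ≤ 1`). -/
theorem laplaceBeltrami_monomial (a b k : ℕ) (hk : a + b = k)
    (m p : ℝ) (hm : m ∈ Set.Ioo (-1 : ℝ) 1) :
    deriv (fun m' => (1 - m' ^ 2) * deriv (fun m'' => sphMonomial a b m'' p) m') m +
        (1 / (1 - m ^ 2)) * deriv (deriv (fun p' => sphMonomial a b m p')) p =
      -((k : ℝ) * ((k : ℝ) + 1)) * sphMonomial a b m p +
        ((a * (a - 1) : ℕ) : ℝ) * sphMonomial (a - 2) b m p +
        ((b * (b - 1) : ℕ) : ℝ) * sphMonomial a (b - 2) m p := by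
  subst hk
  change laplaceBeltrami (fun x q => sphMonomial a b x q) m p = _
  simp only [sphMonomial_eq_mul]
  rw [laplaceBeltrami_mul, legendreOp_sqrt_one_sub_sq_pow _ hm, deriv_deriv_cos_pow_mul_sin_pow]
  have hpos := one_sub_sq_pos hm
  have hsq : √(1 - m ^ 2) ^ 2 = 1 - m ^ 2 := sq_sqrt hpos.le
  have ha := natCast_mul_pred_mul_pow_sub_two_mul_sq a √(1 - m ^ 2)
  have hb := natCast_mul_pred_mul_pow_sub_two_mul_sq b √(1 - m ^ 2)
  rw [hsq] at ha hb
  simp only [pow_add, Nat.cast_add]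
  field_simp
  linear_combination
    -(√(1 - m ^ 2) ^ b * cos p ^ (a - 2) * sin p ^ b) * ha
    - √(1 - m ^ 2) ^ a * cos p ^ a * sin p ^ (b - 2) * hb
end
end

section
/- For each sign pattern ε = (ε₁, ε₂) ∈ {−1, +1}², let a(ε) ∈ ℝ and b(ε) ∈ ℝ², and let the open quadrant be S_ε° := {ω ∈ S² : ε₁ω₁ > 0, ε₂ω₂ > 0}. Suppose f : S² → ℝ is continuous and f(ω) = exp(a(ε) + b(ε)·Ω(ω)) for all ω ∈ S_ε° and all ε. Then (i) all four values a(ε) are equal, and (ii) for quadrants adjacent across a boundary on which a component of Ω does not vanish, the corresponding component of b agrees: b(+,+)₁ = b(+,−)₁, b(−,+)₁ = b(−,−)₁, b(+,+)₂ = b(−,+)₂ and b(+,−)₂ = b(−,−)₂. -/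
open Real

noncomputable section

/-!
The open quadrants are preimages of cones in the plane under the projection `Ω`. Since `Ω` is open
and cones can be rescaled back to the unit sphere, every point of the sphere lying over the closure
of a cone is a limit of points of the sphere lying over the cone itself, so by continuity the ansatz
persists there. Comparing two quadrants at a pole, where `Ω` vanishes, gives `a = a'`; comparing
them at the points lying over a ray common to both closures then gives equality of `b · Ω` on it.
-/

open Set Metric

/-- A subset of a real vector space stable under multiplication by positive scalars. Neither
convexity nor membership of the origin is required, so that open quadrants qualify. -/
def IsPositiveCone {F : Type*} [SMul ℝ F] (C : Set F) : Prop :=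
  ∀ ⦃c : ℝ⦄, 0 < c → MapsTo (c • ·) C C

namespace IsPositiveCone

variable {E F : Type*}

protected theorem Ioi_zero : IsPositiveCone (Ioi (0 : ℝ)) :=
  fun _ hc _ hx => mul_pos hc hx

protected theorem Iio_zero : IsPositiveCone (Iio (0 : ℝ)) :=
  fun _ hc _ hx => mul_neg_of_pos_of_neg hc hx

protected theorem prod [SMul ℝ E] [SMul ℝ F] {C : Set E} {D : Set F}
    (hC : IsPositiveCone C) (hD : IsPositiveCone D) : IsPositiveCone (C ×ˢ D) :=
  fun _ hc _ hx => ⟨hC hc hx.1, hD hc hx.2⟩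

protected theorem preimage [AddCommMonoid E] [Module ℝ E] [AddCommMonoid F] [Module ℝ F]
    {C : Set F} (hC : IsPositiveCone C) (L : E →ₗ[ℝ] F) : IsPositiveCone (L ⁻¹' C) :=
  fun c hc x hx => by simpa only [mem_preimage, map_smul] using hC hc hx

protected theorem closure [TopologicalSpace F] [SMul ℝ F] [ContinuousConstSMul ℝ F] {C : Set F}
    (hC : IsPositiveCone C) : IsPositiveCone (closure C) :=
  fun c hc => (hC hc).closure (continuous_const_smul c)

theorem zero_mem_closure [AddCommGroup F] [Module ℝ F] [TopologicalSpace F] [ContinuousSMul ℝ F]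
    {C : Set F} (hC : IsPositiveCone C) (hne : C.Nonempty) : (0 : F) ∈ closure C := by
  obtain ⟨x, hx⟩ := hne
  have scaling_continuous : Continuous fun c : ℝ => c • x := by fun_prop
  have zero_mem : (0 : ℝ) ∈ closure (Ioi 0) := by simp
  simpa using scaling_continuous.continuousWithinAt.mem_closure zero_mem fun c hc => hC hc hx

variable [NormedAddCommGroup E] [NormedSpace ℝ E]

theorem inv_norm_smul_mem_sphere_inter {K : Set E} (hK : IsPositiveCone K) {x : E} (hx : x ∈ K)
    (hx₀ : x ≠ 0) : ‖x‖⁻¹ • x ∈ sphere (0 : E) 1 ∩ K :=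
  ⟨mem_sphere_zero_iff_norm.2 (norm_smul_inv_norm (𝕜 := ℝ) hx₀),
    hK (inv_pos.2 (norm_pos_iff.2 hx₀)) hx⟩

theorem sphere_inter_closure_subset {K : Set E} (hK : IsPositiveCone K) :
    sphere (0 : E) 1 ∩ closure K ⊆ closure (sphere 0 1 ∩ K) := by
  rintro ω ⟨hω, hωK⟩
  have hω₀ : ω ≠ 0 := ne_zero_of_mem_unit_sphere ⟨ω, hω⟩
  have : (nhdsWithin ω K).NeBot := mem_closure_iff_nhdsWithin_neBot.1 hωK
  have normalize_tendsto : Filter.Tendsto (fun x : E => ‖x‖⁻¹ • x) (nhdsWithin ω K) (nhds ω) := by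
    have normalize_continuousAt : ContinuousAt (fun x : E => ‖x‖⁻¹ • x) ω :=
      (continuousAt_id.norm.inv₀ (norm_ne_zero_iff.2 hω₀)).smul continuousAt_id
    simpa [mem_sphere_zero_iff_norm.1 hω] using
      normalize_continuousAt.tendsto.mono_left nhdsWithin_le_nhds
  refine mem_closure_of_tendsto normalize_tendsto ?_
  filter_upwards [self_mem_nhdsWithin, nhdsWithin_le_nhds (isOpen_ne.mem_nhds hω₀)]
    with x hxK hx₀ using hK.inv_norm_smul_mem_sphere_inter hxK hx₀

end IsPositiveCone

section Ansatz

variable {E F Y : Type*} [NormedAddCommGroup E] [NormedSpace ℝ E]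
  [NormedAddCommGroup F] [NormedSpace ℝ F]

/-- On the part of the unit sphere of `E` that the moment map `L` sends into `C`, the density `f`
is the entropy ansatz with multipliers `(a, ℓ)`. The function `ψ` stands for the derivative of the
conjugate entropy, which is `exp` for Maxwell-Boltzmann entropy. -/
def IsAnsatzOn (ψ : ℝ → Y) (L : E →L[ℝ] F) (C : Set F) (a : ℝ) (ℓ : F →L[ℝ] ℝ) (f : E → Y) :
    Prop :=
  EqOn f (fun ω => ψ (a + ℓ (L ω))) (sphere 0 1 ∩ L ⁻¹' C)

namespace IsAnsatzOn

variable {ψ : ℝ → Y} {L : E →L[ℝ] F} {C C' : Set F} {a a' : ℝ} {ℓ ℓ' : F →L[ℝ] ℝ} {f : E → Y}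

protected theorem closure [CompleteSpace E] [CompleteSpace F] [TopologicalSpace Y] [T2Space Y]
    (h : IsAnsatzOn ψ L C a ℓ f) (hψ : Continuous ψ) (hL : Function.Surjective L)
    (hC : IsPositiveCone C) (hf : ContinuousOn f (sphere 0 1)) :
    IsAnsatzOn ψ L (closure C) a ℓ f := by
  have preimage_closure : L ⁻¹' closure C ⊆ closure (L ⁻¹' C) :=
    (L.isOpenMap hL).preimage_closure_subset_closure_preimage
  refine EqOn.of_subset_closure h (hf.mono inter_subset_left) (by fun_prop)
    (inter_subset_inter_right _ (preimage_mono subset_closure)) ?_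
  exact (inter_subset_inter_right _ preimage_closure).trans
    (hC.preimage L.toLinearMap).sphere_inter_closure_subset

theorem add_inv_norm_mul_eq (h : IsAnsatzOn ψ L C a ℓ f) (h' : IsAnsatzOn ψ L C' a' ℓ' f)
    (hψ : Function.Injective ψ) (hC : IsPositiveCone C) (hC' : IsPositiveCone C') {x : E}
    (hx₀ : x ≠ 0) (hx : L x ∈ C ∩ C') :
    a + ‖x‖⁻¹ * ℓ (L x) = a' + ‖x‖⁻¹ * ℓ' (L x) := by
  have value := h ((hC.preimage L.toLinearMap).inv_norm_smul_mem_sphere_inter hx.1 hx₀)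
  have value' := h' ((hC'.preimage L.toLinearMap).inv_norm_smul_mem_sphere_inter hx.2 hx₀)
  simpa only [map_smul, smul_eq_mul] using hψ (value.symm.trans value')

theorem offset_eq (h : IsAnsatzOn ψ L C a ℓ f) (h' : IsAnsatzOn ψ L C' a' ℓ' f)
    (hψ : Function.Injective ψ) (hC : IsPositiveCone C) (hC' : IsPositiveCone C')
    (hL : ¬ Function.Injective L) (h₀ : (0 : F) ∈ C ∩ C') : a = a' := by
  obtain ⟨x, hLx, hx₀⟩ : ∃ x, L x = 0 ∧ x ≠ 0 := by
    simpa [injective_iff_map_eq_zero] using hL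
  simpa [hLx] using h.add_inv_norm_mul_eq h' hψ hC hC' hx₀ (hLx ▸ h₀)

theorem functional_eqOn (h : IsAnsatzOn ψ L C a ℓ f) (h' : IsAnsatzOn ψ L C' a ℓ' f)
    (hψ : Function.Injective ψ) (hC : IsPositiveCone C) (hC' : IsPositiveCone C')
    (hL : Function.Surjective L) : EqOn ℓ ℓ' (C ∩ C') := by
  intro p hp
  obtain ⟨x, rfl⟩ := hL p
  rcases eq_or_ne x 0 with rfl | hx₀
  · simp only [map_zero]
  · simpa [hx₀] using h.add_inv_norm_mul_eq h' hψ hC hC' hx₀ hp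

theorem multipliers_eq [CompleteSpace E] [CompleteSpace F] [TopologicalSpace Y] [T2Space Y]
    (h : IsAnsatzOn ψ L C a ℓ f) (h' : IsAnsatzOn ψ L C' a' ℓ' f)
    (hψ : Continuous ψ) (hψ_inj : Function.Injective ψ)
    (hL : Function.Surjective L) (hL_inj : ¬ Function.Injective L)
    (hf : ContinuousOn f (sphere 0 1)) (hC : IsPositiveCone C) (hC' : IsPositiveCone C')
    {p : F} (hp : p ∈ closure C ∩ closure C') : a = a' ∧ ℓ p = ℓ' p := by
  have on_closure := h.closure hψ hL hC hf
  have on_closure' := h'.closure hψ hL hC' hf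
  have zero_mem : (0 : F) ∈ closure C ∩ closure C' :=
    ⟨hC.zero_mem_closure (closure_nonempty_iff.1 ⟨p, hp.1⟩),
      hC'.zero_mem_closure (closure_nonempty_iff.1 ⟨p, hp.2⟩)⟩
  obtain rfl := on_closure.offset_eq on_closure' hψ_inj hC.closure hC'.closure hL_inj zero_mem
  exact ⟨rfl, on_closure.functional_eqOn on_closure' hψ_inj hC.closure hC'.closure hL hp⟩

end IsAnsatzOn

end Ansatz

/-- The functional `p ↦ b · p` on the plane, written out because `ℝ × ℝ` carries the sup norm and
hence no inner product. -/
def dotProd (b : ℝ × ℝ) : ℝ × ℝ →L[ℝ] ℝ :=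
  b.1 • ContinuousLinearMap.fst ℝ ℝ ℝ + b.2 • ContinuousLinearMap.snd ℝ ℝ ℝ

theorem dotProd_apply (b p : ℝ × ℝ) : dotProd b p = b.1 * p.1 + b.2 * p.2 := rfl

theorem mixed_moment_ansatz_continuity_general {E Y : Type*} [NormedAddCommGroup E]
    [NormedSpace ℝ E] [CompleteSpace E] [TopologicalSpace Y] [T2Space Y]
    {ψ : ℝ → Y} (hψ : Continuous ψ) (hψ_inj : Function.Injective ψ)
    {L : E →L[ℝ] ℝ × ℝ} (hL : Function.Surjective L) (hL_inj : ¬ Function.Injective L)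
    {f : E → Y} (hf : ContinuousOn f (sphere 0 1))
    {app amp amm apm : ℝ} {bpp bmp bmm bpm : ℝ × ℝ}
    (hpp : IsAnsatzOn ψ L (Ioi 0 ×ˢ Ioi 0) app (dotProd bpp) f)
    (hmp : IsAnsatzOn ψ L (Iio 0 ×ˢ Ioi 0) amp (dotProd bmp) f)
    (hmm : IsAnsatzOn ψ L (Iio 0 ×ˢ Iio 0) amm (dotProd bmm) f)
    (hpm : IsAnsatzOn ψ L (Ioi 0 ×ˢ Iio 0) apm (dotProd bpm) f) :
    (app = amp ∧ app = amm ∧ app = apm) ∧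
      bpp.1 = bpm.1 ∧ bmp.1 = bmm.1 ∧ bpp.2 = bmp.2 ∧ bpm.2 = bmm.2 := by
  have pos_cone := IsPositiveCone.Ioi_zero
  have neg_cone := IsPositiveCone.Iio_zero
  obtain ⟨-, b_right⟩ := hpp.multipliers_eq hpm hψ hψ_inj hL hL_inj hf (pos_cone.prod pos_cone)
    (pos_cone.prod neg_cone) (p := (1, 0)) (by simp [closure_prod_eq])
  obtain ⟨a_left, b_left⟩ := hmp.multipliers_eq hmm hψ hψ_inj hL hL_inj hf
    (neg_cone.prod pos_cone) (neg_cone.prod neg_cone) (p := (-1, 0)) (by simp [closure_prod_eq])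
  obtain ⟨a_top, b_top⟩ := hpp.multipliers_eq hmp hψ hψ_inj hL hL_inj hf (pos_cone.prod pos_cone)
    (neg_cone.prod pos_cone) (p := (0, 1)) (by simp [closure_prod_eq])
  obtain ⟨a_bottom, b_bottom⟩ := hpm.multipliers_eq hmm hψ hψ_inj hL hL_inj hf
    (pos_cone.prod neg_cone) (neg_cone.prod neg_cone) (p := (0, -1)) (by simp [closure_prod_eq])
  refine ⟨⟨a_top, a_top.trans a_left, (a_top.trans a_left).trans a_bottom.symm⟩, ?_, ?_, ?_, ?_⟩
  · simpa [dotProd_apply] using b_right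
  · simpa [dotProd_apply] using b_left
  · simpa [dotProd_apply] using b_top
  · simpa [dotProd_apply] using b_bottom

/-- The projection `Ω` of `ℝ³` onto its first two coordinates, which is the moment map of the
mixed-moment ansatz. -/
def planeProj : EuclideanSpace ℝ (Fin 3) →L[ℝ] ℝ × ℝ :=
  (EuclideanSpace.proj 0).prod (EuclideanSpace.proj 1)

theorem planeProj_apply (ω : EuclideanSpace ℝ (Fin 3)) : planeProj ω = (ω 0, ω 1) := rfl

theorem planeProj_surjective : Function.Surjective planeProj :=
  fun p => ⟨!₂[p.1, p.2, 0], by simp [planeProj_apply]⟩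

theorem planeProj_not_injective : ¬ Function.Injective planeProj := fun hinj => by
  have pole_eq_zero : EuclideanSpace.single (2 : Fin 3) (1 : ℝ) = 0 :=
    hinj (by simp [planeProj_apply])
  simp at pole_eq_zero

theorem isAnsatzOn_planeProj_prod_iff {Y : Type*} {ψ : ℝ → Y} {U V : Set ℝ} {a : ℝ} {b : ℝ × ℝ}
    {f : EuclideanSpace ℝ (Fin 3) → Y} :
    IsAnsatzOn ψ planeProj (U ×ˢ V) a (dotProd b) f ↔
      ∀ ω ∈ sphere (0 : EuclideanSpace ℝ (Fin 3)) 1, ω 0 ∈ U → ω 1 ∈ V →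
        f ω = ψ (a + b.1 * ω 0 + b.2 * ω 1) := by
  simp only [IsAnsatzOn, EqOn, mem_inter_iff, mem_preimage, mem_prod, planeProj_apply,
    dotProd_apply, and_imp, add_assoc]

/-- Continuity requirement for the quadrant-wise minimum-entropy ansatz: if a continuous function
on the unit sphere coincides on each open quadrant `S_ε°` with `exp(a(ε) + b(ε)·Ω)`, then all
four multipliers `a(ε)` agree, and for quadrants adjacent across a boundary on which a component
of `Ω` does not vanish, the corresponding component of `b` agrees. -/
theorem mixed_moment_ansatz_continuity
    (f : EuclideanSpace ℝ (Fin 3) → ℝ)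
    (hf : ContinuousOn f (Metric.sphere (0 : EuclideanSpace ℝ (Fin 3)) 1))
    (app amp amm apm : ℝ) (bpp bmp bmm bpm : ℝ × ℝ)
    (hpp : ∀ ω ∈ Metric.sphere (0 : EuclideanSpace ℝ (Fin 3)) 1,
      0 < ω 0 → 0 < ω 1 → f ω = Real.exp (app + bpp.1 * ω 0 + bpp.2 * ω 1))
    (hmp : ∀ ω ∈ Metric.sphere (0 : EuclideanSpace ℝ (Fin 3)) 1,
      ω 0 < 0 → 0 < ω 1 → f ω = Real.exp (amp + bmp.1 * ω 0 + bmp.2 * ω 1))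
    (hmm : ∀ ω ∈ Metric.sphere (0 : EuclideanSpace ℝ (Fin 3)) 1,
      ω 0 < 0 → ω 1 < 0 → f ω = Real.exp (amm + bmm.1 * ω 0 + bmm.2 * ω 1))
    (hpm : ∀ ω ∈ Metric.sphere (0 : EuclideanSpace ℝ (Fin 3)) 1,
      0 < ω 0 → ω 1 < 0 → f ω = Real.exp (apm + bpm.1 * ω 0 + bpm.2 * ω 1)) :
    (app = amp ∧ app = amm ∧ app = apm) ∧
      bpp.1 = bpm.1 ∧ bmp.1 = bmm.1 ∧ bpp.2 = bmp.2 ∧ bpm.2 = bmm.2 :=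
  mixed_moment_ansatz_continuity_general continuous_exp exp_injective planeProj_surjective
    planeProj_not_injective hf (isAnsatzOn_planeProj_prod_iff.2 hpp)
    (isAnsatzOn_planeProj_prod_iff.2 hmp) (isAnsatzOn_planeProj_prod_iff.2 hmm)
    (isAnsatzOn_planeProj_prod_iff.2 hpm)
end
end
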